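/- Kaneko–Zagier type equation for ϑ(τ,2z)·ϑ(τ,z)²: with all heat operators taken with index m = 3, the function G(τ,z) = ϑ(τ,2z)·ϑ(τ,z)² satisfies H^{(3)}_{7/2}(H^{(3)}_{3/2}(G))(τ,z) − (5/4)·E₄(τ)·G(τ,z) = 0 for all (τ,z) ∈ ℍ × ℂ. -/

import Mathlib

/-!
The proof reduces the equation in two variables to an ordinary differential equation in `τ`.

Write `Θ_r = θ_{3,r} - θ_{3,-r}` with `θ_{3,r} = ∑_{n ≡ r mod 6} q^{n²/12} ζ^n`. Expressing `ϑ(τ,z)²`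
by the two theta functions of index one (`thetaJ_sq`) and multiplying by `ϑ(τ,2z)`
(`thetaJ_mul_Phi_zero`, `thetaJ_mul_Phi_one`) gives `G = h₁ Θ₁ + h₂ Θ₂` with explicit holomorphic
`h₁, h₂` (`theta_decomposition`). The heat operator of index 3 annihilates `Θ₁` and `Θ₂`, so the
left-hand side of the claim is `KZ(h₁) Θ₁ + KZ(h₂) Θ₂` for a second order operator `KZ` in
`D = q d/dq` (`heat_equation_eq`).

To see that `KZ(h₁) = KZ(h₂) = 0` (`KZ_eq_zero`), let `t_k` be the Taylor coefficients of `ϑ` at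
`z = 0`. The odd Taylor coefficients of `G` are polynomials in `t₁, t₃, t₅` (`taylor_theta`), and
`t_{k+2} = 2 D t_k`. The identity `D t₁ = E₂ t₁ / 8` (`Dq_tj_one`) and Ramanujan's equation
`D E₂ = (E₂² - E₄) / 12` (`ramanujan`) turn them into `t₁³` times polynomials in `E₂, E₄`.
Differentiating the Taylor coefficients of `h₁ Θ₁ + h₂ Θ₂` in `τ` then shows that `(KZ(h₁), KZ(h₂))`
pairs to zero with the vectors of first and of third Taylor coefficients of `(Θ₁, Θ₂)`. These
two vectors are linearly independent because `t₁` has no zeros.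

Both inputs come from level one modular forms. The form `D E₂ - E₂² / 12` has weight 4, hence is a
multiple of `E₄`; and `t₁⁸` is a cusp form of weight 12, hence a multiple of `Δ = η²⁴`, whose
logarithmic derivative is `E₂`.
-/

open Complex Real

noncomputable section

/-- The Jacobi theta series `ϑ(τ,z) = q^{1/8} ζ^{1/2} ∑_{n∈ℤ} (−1)^n q^{n(n+1)/2} ζ^n`
with `q = e^{2πiτ}`, `ζ = e^{2πiz}`. -/
def thetaJ (τ z : ℂ) : ℂ :=
  Complex.exp (π * I * τ / 4) * Complex.exp (π * I * z) *
    ∑' n : ℤ, (-1 : ℂ) ^ n * Complex.exp (π * I * τ * n * (n + 1)) *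
      Complex.exp (2 * π * I * z * n)

/-- The Dedekind eta function `η(τ) = q^{1/24} ∏_{n≥1} (1 − q^n)`. -/
def etaD (τ : ℂ) : ℂ :=
  Complex.exp (π * I * τ / 12) * ∏' n : ℕ, (1 - Complex.exp (2 * π * I * τ * (n + 1)))

/-- The divisor power sum `σ_k(n) = ∑_{d ∣ n} d^k`. -/
def sigmaD (k n : ℕ) : ℕ := ∑ d ∈ n.divisors, d ^ k

/-- The quasi-modular Eisenstein series `E₂`. -/
def Eis2 (τ : ℂ) : ℂ :=
  1 - 24 * ∑' n : ℕ, (sigmaD 1 (n + 1) : ℂ) * Complex.exp (2 * π * I * τ * (n + 1))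

/-- The Eisenstein series `E₄`. -/
def Eis4 (τ : ℂ) : ℂ :=
  1 + 240 * ∑' n : ℕ, (sigmaD 3 (n + 1) : ℂ) * Complex.exp (2 * π * I * τ * (n + 1))

/-- The Eisenstein series `E₆`. -/
def Eis6 (τ : ℂ) : ℂ :=
  1 - 504 * ∑' n : ℕ, (sigmaD 5 (n + 1) : ℂ) * Complex.exp (2 * π * I * τ * (n + 1))

/-- The heat operator `H^{(m)}φ = (12/(2πi)) ∂φ/∂τ + (3/(4π²m)) ∂²φ/∂z²` of index `m`. -/
def heatOp (m : ℚ) (φ : ℂ → ℂ → ℂ) (τ z : ℂ) : ℂ :=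
  12 / (2 * π * I) * deriv (fun t => φ t z) τ
    + 3 / (4 * π ^ 2 * (m : ℂ)) * deriv (deriv (φ τ)) z

/-- The modular heat operator `H^{(m)}_k φ = H^{(m)}φ − ((2k−1)/2)·E₂·φ`. -/
def heatMod (m k : ℚ) (φ : ℂ → ℂ → ℂ) (τ z : ℂ) : ℂ :=
  heatOp m φ τ z - (2 * (k : ℂ) - 1) / 2 * Eis2 τ * φ τ z

/-! ### Theta series with characteristics -/

/-- Frequencies `N n + a` of a shifted theta series. -/
def frq (N a : ℝ) (n : ℤ) : ℝ := N * n + a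

/-- The general term `ε λ^k e^{πiκτλ² + 2πizλ}` of a theta series. -/
def msTerm (lam κ : ℝ) (ε : ℂ) (k : ℕ) (τ z : ℂ) : ℂ :=
  ε * (lam : ℂ) ^ k * cexp (π * I * κ * τ * (lam : ℂ) ^ 2 + 2 * π * I * z * lam)

/-- The series `∑ ε(n) λ^k e^{πiκτλ² + 2πizλ}` over `λ = N n + a`; the exponent `k` counts
derivatives in `z`, normalized by powers of `2πi`. -/
def ms (N a κ : ℝ) (ε : ℤ → ℂ) (k : ℕ) (τ z : ℂ) : ℂ :=
  ∑' n : ℤ, msTerm (frq N a n) κ (ε n) k τ z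

lemma summable_exp_neg_abs_frq {N : ℝ} (hN : 0 < N) (a : ℝ) :
    Summable fun n : ℤ => Real.exp (-|frq N a n|) := by
  have key : Summable fun n : ℤ => Real.exp |a| * Real.exp (-(N * |(n : ℝ)|)) := by
    apply Summable.mul_left
    have h : Summable fun n : ℕ => Real.exp (-(N * |((n : ℤ) : ℝ)|)) := by
      have := Real.summable_exp_nat_mul_iff.mpr (neg_lt_zero.mpr hN)
      refine this.congr fun n => ?_
      simp [mul_comm]
    refine Summable.of_nat_of_neg (f := fun n : ℤ => Real.exp (-(N * |(n : ℝ)|))) h ?_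
    refine h.congr fun n => ?_
    rw [Int.cast_neg, abs_neg]
  refine Summable.of_nonneg_of_le (fun _ => (Real.exp_pos _).le) (fun n => ?_) key
  rw [← Real.exp_add, Real.exp_le_exp, frq]
  have h1 : |N * (n : ℝ)| = N * |(n : ℝ)| := by rw [abs_mul, abs_of_pos hN]
  have h2 : |N * (n : ℝ)| ≤ |N * (n : ℝ) + a| + |a| := by
    simpa using abs_sub (N * (n : ℝ) + a) a
  linarith

lemma exists_gauss_bound (A : ℝ) (hA : 0 < A) (B : ℝ) (k : ℕ) :
    ∃ C : ℝ, ∀ x : ℝ, |x| ^ k * Real.exp (-A * x ^ 2 + B * |x|) ≤ C * Real.exp (-|x|) := by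
  -- `|x|^k ≤ k! e^{|x|}`, and completing the square bounds what is left
  refine ⟨k.factorial * Real.exp ((B + 2) ^ 2 / (4 * A)), fun x => ?_⟩
  have h1 : |x| ^ k ≤ k.factorial * Real.exp |x| := by
    have := Real.pow_div_factorial_le_exp |x| (abs_nonneg x) k
    rwa [div_le_iff₀' (by positivity)] at this
  calc |x| ^ k * Real.exp (-A * x ^ 2 + B * |x|)
      ≤ (k.factorial * Real.exp |x|) * Real.exp (-A * x ^ 2 + B * |x|) := by gcongr
    _ = k.factorial * Real.exp (|x| + (-A * x ^ 2 + B * |x|)) := by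
        rw [Real.exp_add |x|]; ring
    _ ≤ k.factorial * Real.exp ((B + 2) ^ 2 / (4 * A) + -|x|) := by
        refine mul_le_mul_of_nonneg_left (Real.exp_le_exp.mpr ?_) (by positivity)
        have : (B + 2) ^ 2 / (4 * A) + -|x| - (|x| + (-A * x ^ 2 + B * |x|))
            = (2 * A * |x| - (B + 2)) ^ 2 / (4 * A) := by
          rw [← sq_abs x]; field_simp; ring
        have h2 : 0 ≤ (2 * A * |x| - (B + 2)) ^ 2 / (4 * A) := by positivity
        linarith
    _ = _ := by rw [Real.exp_add]; ring

lemma summable_gauss {N : ℝ} (hN : 0 < N) (a A : ℝ) (hA : 0 < A) (B : ℝ) (k : ℕ) :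
    Summable fun n : ℤ => |frq N a n| ^ k *
      Real.exp (-A * frq N a n ^ 2 + B * |frq N a n|) := by
  obtain ⟨C, hC⟩ := exists_gauss_bound A hA B k
  exact Summable.of_nonneg_of_le (fun _ => by positivity) (fun n => hC _)
    ((summable_exp_neg_abs_frq hN a).mul_left C)

lemma norm_msTerm_le {κ T S : ℝ} (hκ : 0 < κ) {ε : ℂ} (hε : ‖ε‖ ≤ 1) (lam : ℝ) (k : ℕ)
    {τ z : ℂ} (hτ : T ≤ τ.im) (hz : |z.im| ≤ S) :
    ‖msTerm lam κ ε k τ z‖ ≤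
      |lam| ^ k * Real.exp (-(π * κ * T) * lam ^ 2 + 2 * π * S * |lam|) := by
  rw [msTerm, norm_mul, norm_mul, norm_pow, Complex.norm_real, Real.norm_eq_abs, Complex.norm_exp]
  have hre : (π * I * κ * τ * (lam : ℂ) ^ 2 + 2 * π * I * z * lam).re
      = -(π * κ * τ.im) * lam ^ 2 - 2 * π * z.im * lam := by
    have : (π * I * κ * τ * (lam : ℂ) ^ 2 + 2 * π * I * z * lam)
      = ((π * κ * lam ^ 2 : ℝ) : ℂ) * (τ * I) + ((2 * π * lam : ℝ) : ℂ) * (z * I) := by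
      push_cast; ring
    rw [this, add_re, re_ofReal_mul, re_ofReal_mul, mul_I_re, mul_I_re]; ring
  rw [hre]
  have h1 : -(π * κ * τ.im) * lam ^ 2 - 2 * π * z.im * lam
      ≤ -(π * κ * T) * lam ^ 2 + 2 * π * S * |lam| := by
    have a1 : π * κ * T * lam ^ 2 ≤ π * κ * τ.im * lam ^ 2 := by gcongr
    have a2 : -(z.im * lam) ≤ S * |lam| :=
      (neg_le_abs _).trans (by rw [abs_mul]; gcongr)
    have a3 := mul_le_mul_of_nonneg_left a2 (by positivity : (0:ℝ) ≤ 2 * π)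
    nlinarith
  refine mul_le_mul ?_ (Real.exp_le_exp.mpr h1) (Real.exp_pos _).le (by positivity)
  exact mul_le_of_le_one_left (by positivity) hε

lemma summable_msTerm {N κ : ℝ} (hN : 0 < N) (a : ℝ) (hκ : 0 < κ) {ε : ℤ → ℂ}
    (hε : ∀ n, ‖ε n‖ ≤ 1) (k : ℕ) {τ : ℂ} (hτ : 0 < τ.im) (z : ℂ) :
    Summable fun n => msTerm (frq N a n) κ (ε n) k τ z :=
  Summable.of_norm_bounded (summable_gauss hN a _ (by positivity : 0 < π * κ * τ.im) _ k)
    fun n => norm_msTerm_le hκ (hε n) _ k le_rfl le_rfl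

lemma ms_hasDerivAt_z {N κ : ℝ} (hN : 0 < N) (a : ℝ) (hκ : 0 < κ) {ε : ℤ → ℂ}
    (hε : ∀ n, ‖ε n‖ ≤ 1) (k : ℕ) {τ : ℂ} (hτ : 0 < τ.im) (z : ℂ) :
    HasDerivAt (ms N a κ ε k τ) (2 * π * I * ms N a κ ε (k + 1) τ z) z := by
  have hU : IsOpen {w : ℂ | |w.im| < |z.im| + 1} :=
    isOpen_lt (continuous_abs.comp Complex.continuous_im) continuous_const
  have hz : z ∈ {w : ℂ | |w.im| < |z.im| + 1} := by simp
  have hd : ∀ n, Differentiable ℂ fun w => msTerm (frq N a n) κ (ε n) k τ w := fun n => by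
    unfold msTerm; fun_prop
  have hle : ∀ n w, w ∈ {w : ℂ | |w.im| < |z.im| + 1} → _ := fun n w hw =>
    norm_msTerm_le hκ (hε n) (frq N a n) k (le_refl τ.im) (le_of_lt hw)
  have hs := summable_gauss hN a _ (by positivity : 0 < π * κ * τ.im) (2 * π * (|z.im| + 1)) k
  have h1 := Complex.hasSum_deriv_of_summable_norm hs (fun n => (hd n).differentiableOn) hU hle hz
  have h2 := Complex.differentiableOn_tsum_of_summable_norm hs
    (fun n => (hd n).differentiableOn) hU hle
  have h3 := (h2.differentiableAt (hU.mem_nhds hz)).hasDerivAt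
  have h4 : deriv (fun w => ∑' n, msTerm (frq N a n) κ (ε n) k τ w) z
      = 2 * π * I * ms N a κ ε (k + 1) τ z := by
    rw [← h1.tsum_eq, ms, ← tsum_mul_left]
    congr 1; ext n
    have : HasDerivAt (fun w => msTerm (frq N a n) κ (ε n) k τ w)
        (ε n * (frq N a n : ℂ) ^ k * (cexp (π * I * κ * τ * (frq N a n : ℂ) ^ 2 +
          2 * π * I * z * frq N a n) * (2 * π * I * 1 * frq N a n))) z := by
      refine HasDerivAt.const_mul _ (HasDerivAt.cexp ?_)
      exact (((hasDerivAt_id z).const_mul _).mul_const _).const_add _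
    rw [this.deriv, msTerm]; ring
  rw [h4] at h3; exact h3

lemma ms_hasDerivAt_τ {N κ : ℝ} (hN : 0 < N) (a : ℝ) (hκ : 0 < κ) {ε : ℤ → ℂ}
    (hε : ∀ n, ‖ε n‖ ≤ 1) (k : ℕ) {τ : ℂ} (hτ : 0 < τ.im) (z : ℂ) :
    HasDerivAt (fun t => ms N a κ ε k t z) (π * I * κ * ms N a κ ε (k + 2) τ z) τ := by
  have hU : IsOpen {w : ℂ | τ.im / 2 < w.im} := isOpen_lt continuous_const Complex.continuous_im
  have hz : τ ∈ {w : ℂ | τ.im / 2 < w.im} := by simp [hτ]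
  have hd : ∀ n, Differentiable ℂ fun t => msTerm (frq N a n) κ (ε n) k t z := fun n => by
    unfold msTerm; fun_prop
  have hle : ∀ n w, w ∈ {w : ℂ | τ.im / 2 < w.im} → _ := fun n w hw =>
    norm_msTerm_le hκ (hε n) (frq N a n) k (le_of_lt hw) (le_refl |z.im|)
  have hs := summable_gauss hN a _ (by positivity : 0 < π * κ * (τ.im / 2)) (2 * π * |z.im|) k
  have h1 := Complex.hasSum_deriv_of_summable_norm hs (fun n => (hd n).differentiableOn) hU hle hz
  have h2 := Complex.differentiableOn_tsum_of_summable_norm hs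
    (fun n => (hd n).differentiableOn) hU hle
  have h3 := (h2.differentiableAt (hU.mem_nhds hz)).hasDerivAt
  have h4 : deriv (fun t => ∑' n, msTerm (frq N a n) κ (ε n) k t z) τ
      = π * I * κ * ms N a κ ε (k + 2) τ z := by
    rw [← h1.tsum_eq, ms, ← tsum_mul_left]
    congr 1; ext n
    have : HasDerivAt (fun t => msTerm (frq N a n) κ (ε n) k t z)
        (ε n * (frq N a n : ℂ) ^ k * (cexp (π * I * κ * τ * (frq N a n : ℂ) ^ 2 +
          2 * π * I * z * frq N a n) * (π * I * κ * 1 * (frq N a n : ℂ) ^ 2))) τ := by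
      refine HasDerivAt.const_mul _ (HasDerivAt.cexp ?_)
      exact (((hasDerivAt_id τ).const_mul _).mul_const _).add_const _
    rw [this.deriv, msTerm]; ring
  rw [h4] at h3; exact h3

/-! ### The theta decomposition -/

/-- The sign character `n ↦ (-1)^n`. -/
def sg (n : ℤ) : ℂ := (-1) ^ n

/-- The trivial sign. -/
def tr (_ : ℤ) : ℂ := 1

lemma norm_sg (n : ℤ) : ‖sg n‖ ≤ 1 := by simp [sg]

lemma norm_tr (n : ℤ) : ‖tr n‖ ≤ 1 := by simp [tr]

lemma sg_add (m n : ℤ) : sg (m + n) = sg m * sg n := zpow_add₀ (by norm_num) _ _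

lemma sg_mul_self (n : ℤ) : sg n * sg n = 1 := by
  rw [sg, ← mul_zpow]; simp

lemma sg_two_mul (n : ℤ) : sg (2 * n) = 1 := by
  rw [two_mul, sg_add, sg_mul_self]

lemma sg_neg (n : ℤ) : sg (-n) = sg n := by
  have h : sg (-n) * sg n = 1 := by rw [← sg_add]; simp [sg]
  calc sg (-n) = sg (-n) * (sg n * sg n) := by rw [sg_mul_self, mul_one]
    _ = sg n := by rw [← mul_assoc, h, one_mul]

lemma sg_one : sg 1 = -1 := by simp [sg]

lemma thetaJ_eq (τ z : ℂ) : thetaJ τ z = ms 1 (1 / 2) 1 sg 0 τ z := by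
  rw [thetaJ, ms, ← tsum_mul_left]
  congr 1; ext n
  rw [msTerm, frq, sg, pow_zero, mul_one]
  have : ∀ a b c d e : ℂ, a * b * (c * d * e) = c * (a * b * d * e) := by intros; ring
  rw [this, ← Complex.exp_add, ← Complex.exp_add, ← Complex.exp_add]
  congr 2
  push_cast; ring

/-- Product of two terms of theta series, up to a sign, only depends on the total quadratic
and linear exponents. -/
lemma msTerm_mul_congr {l₁ l₂ l₃ l₄ κ₁ κ₂ κ₃ κ₄ : ℝ} {ε₁ ε₂ ε₃ ε₄ z₁ z₂ z₃ z₄ : ℂ} (s τ : ℂ)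
    (hq : κ₁ * l₁ ^ 2 + κ₂ * l₂ ^ 2 = κ₃ * l₃ ^ 2 + κ₄ * l₄ ^ 2)
    (hl : z₁ * l₁ + z₂ * l₂ = z₃ * l₃ + z₄ * l₄) (hε : ε₁ * ε₂ = s * (ε₃ * ε₄)) :
    msTerm l₁ κ₁ ε₁ 0 τ z₁ * msTerm l₂ κ₂ ε₂ 0 τ z₂ =
      s * (msTerm l₃ κ₃ ε₃ 0 τ z₃ * msTerm l₄ κ₄ ε₄ 0 τ z₄) := by
  have key : ∀ (l l' κ κ' : ℝ) (ε ε' z z' : ℂ), msTerm l κ ε 0 τ z * msTerm l' κ' ε' 0 τ z'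
      = (ε * ε') * cexp (π * I * τ * ((κ * l ^ 2 + κ' * l' ^ 2 : ℝ) : ℂ)
        + 2 * π * I * (z * l + z' * l')) := by
    intro l l' κ κ' ε ε' z z'
    rw [msTerm, msTerm, pow_zero, pow_zero, mul_one, mul_one, mul_mul_mul_comm, ← Complex.exp_add]
    congr 2
    push_cast; ring
  rw [key, key, hq, hl, hε, mul_assoc]

lemma hasSum_ms_mul {N₁ κ₁ N₂ κ₂ : ℝ} (hN₁ : 0 < N₁) (a₁ : ℝ) (hκ₁ : 0 < κ₁) (hN₂ : 0 < N₂)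
    (a₂ : ℝ) (hκ₂ : 0 < κ₂) {ε₁ ε₂ : ℤ → ℂ} (hε₁ : ∀ n, ‖ε₁ n‖ ≤ 1) (hε₂ : ∀ n, ‖ε₂ n‖ ≤ 1)
    {τ : ℂ} (hτ : 0 < τ.im) (z₁ z₂ : ℂ) :
    HasSum (fun p : ℤ × ℤ => msTerm (frq N₁ a₁ p.1) κ₁ (ε₁ p.1) 0 τ z₁ *
      msTerm (frq N₂ a₂ p.2) κ₂ (ε₂ p.2) 0 τ z₂)
      (ms N₁ a₁ κ₁ ε₁ 0 τ z₁ * ms N₂ a₂ κ₂ ε₂ 0 τ z₂) := by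
  have h1 := (summable_msTerm hN₁ a₁ hκ₁ hε₁ 0 hτ z₁).norm
  have h2 := (summable_msTerm hN₂ a₂ hκ₂ hε₂ 0 hτ z₂).norm
  rw [ms, ms, tsum_mul_tsum_of_summable_norm h1 h2]
  exact (summable_mul_of_summable_norm h1 h2).hasSum

/-- The unary theta series `∑ q^{m²} ζ^{2m}` (`r = 0`) and `∑ q^{(m+1/2)²} ζ^{2m+1}` (`r = 1`). -/
def Phi (r : ℝ) (τ z : ℂ) : ℂ := ms 2 r (1 / 2) tr 0 τ z

/-- The theta functions `∑_{n ≡ r mod 6} q^{n²/12} ζ^n` of index 3. -/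
def th (r : ℝ) (τ z : ℂ) : ℂ := ms 6 r (1 / 6) tr 0 τ z

/-- Euler's series `∑ (-1)^y q^{(6y+1)²/24}`. -/
def eu (τ : ℂ) : ℂ := ms 6 1 (1 / 12) sg 0 τ 0

/-- A double series may be summed separately over two complementary sublattice cosets. -/
lemma hasSum_split_two {F : ℤ × ℤ → ℂ} {g₁ g₂ : ℤ × ℤ → ℤ × ℤ}
    (hg : Function.Bijective (Sum.elim g₁ g₂)) {a b₁ b₂ : ℂ} (h : HasSum F a)
    (h₁ : HasSum (fun p => F (g₁ p)) b₁) (h₂ : HasSum (fun p => F (g₂ p)) b₂) : a = b₁ + b₂ :=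
  ((Equiv.ofBijective _ hg).hasSum_iff.mpr h).unique (HasSum.sum h₁ h₂)

/-- A double series may be summed separately over three complementary sublattice cosets. -/
lemma hasSum_split_three {F : ℤ × ℤ → ℂ} {g₁ g₂ g₃ : ℤ × ℤ → ℤ × ℤ}
    (hg : Function.Bijective (Sum.elim g₁ (Sum.elim g₂ g₃))) {a b₁ b₂ b₃ : ℂ} (h : HasSum F a)
    (h₁ : HasSum (fun p => F (g₁ p)) b₁) (h₂ : HasSum (fun p => F (g₂ p)) b₂)
    (h₃ : HasSum (fun p => F (g₃ p)) b₃) : a = b₁ + (b₂ + b₃) :=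
  ((Equiv.ofBijective _ hg).hasSum_iff.mpr h).unique (HasSum.sum h₁ (HasSum.sum h₂ h₃))

/-- The sum over `(m, n)` splits according to the parity of `m + n`. -/
lemma thetaJ_sq {τ : ℂ} (hτ : 0 < τ.im) (z : ℂ) :
    thetaJ τ z ^ 2 = -1 * (Phi 1 τ 0 * Phi 0 τ z) + Phi 0 τ 0 * Phi 1 τ z := by
  have hL := hasSum_ms_mul one_pos (1 / 2) one_pos one_pos (1 / 2) one_pos norm_sg norm_sg hτ z z
  have two : (0 : ℝ) < 2 := two_pos
  have half : (0 : ℝ) < 1 / 2 := by norm_num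
  have h1 := (hasSum_ms_mul two 1 half two 0 half norm_tr norm_tr hτ 0 z).mul_left (-1)
  have h2 := hasSum_ms_mul two 0 half two 1 half norm_tr norm_tr hτ 0 z
  rw [sq, thetaJ_eq]
  -- the pair `(i, j)` is recorded by half the sum and difference of the frequencies
  refine hasSum_split_two (g₁ := fun p => (p.2 + p.1, p.2 - p.1 - 1))
    (g₂ := fun p => (p.2 + p.1, p.2 - p.1)) ?_ hL (h1.congr_fun fun p => ?_)
    (h2.congr_fun fun p => ?_)
  · constructor
    · rintro (⟨a, b⟩ | ⟨a, b⟩) (⟨c, d⟩ | ⟨c, d⟩) h <;>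
        simp only [Sum.elim_inl, Sum.elim_inr, Prod.mk.injEq, Sum.inl.injEq, Sum.inr.injEq,
          reduceCtorEq] at h ⊢ <;> omega
    · rintro ⟨i, j⟩
      rcases Int.even_or_odd' (i + j) with ⟨k, hk | hk⟩
      · exact ⟨Sum.inr (i - k, k), by simp only [Sum.elim_inr, Prod.mk.injEq]; omega⟩
      · exact ⟨Sum.inl (i - k - 1, k + 1), by simp only [Sum.elim_inl, Prod.mk.injEq]; omega⟩
  · apply msTerm_mul_congr
    · simp only [frq]; push_cast; ring
    · simp only [frq]; push_cast; ring
    · rw [← sg_add, show p.2 + p.1 + (p.2 - p.1 - 1) = 2 * (p.2 - 1) + 1 by ring, sg_add,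
        sg_two_mul, sg_one]
      simp [tr]
  · refine (msTerm_mul_congr 1 τ ?_ ?_ ?_).trans (one_mul _)
    · simp only [frq]; push_cast; ring
    · simp only [frq]; push_cast; ring
    · rw [← sg_add, show p.2 + p.1 + (p.2 - p.1) = 2 * p.2 by ring, sg_two_mul]
      simp [tr]

/-- Reversing the order of summation. -/
lemma ms_reflect (N a κ : ℝ) {ε : ℤ → ℂ} (c : ℤ) (s : ℂ) (hε : ∀ n, ε (c - n) = s * ε n) (b : ℝ)
    (hb : N * c + a = -b) (τ : ℂ) :
    ms N a κ ε 0 τ 0 = s * ms N b κ ε 0 τ 0 := by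
  rw [ms, ms, ← tsum_mul_left, ← (Equiv.subLeft c).tsum_eq]
  congr 1; ext n
  have : frq N a (c - n) = -frq N b n := by
    simp only [frq]; push_cast; linarith
  simp only [Equiv.subLeft_apply, msTerm, this, hε]
  push_cast
  ring_nf

lemma eu_neg (τ : ℂ) : ms 6 (-1) (1 / 12) sg 0 τ 0 = eu τ := by
  rw [ms_reflect 6 (-1) (1 / 12) 0 1 (fun n => by rw [zero_sub, sg_neg, one_mul]) 1 (by simp),
    one_mul, eu]

lemma eu_three (τ : ℂ) : ms 6 3 (1 / 12) sg 0 τ 0 = 0 := by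
  have := ms_reflect 6 3 (1 / 12) (ε := sg) (-1) (-1)
    (fun n => by rw [sub_eq_add_neg, sg_add, sg_neg, sg_neg, sg_one]) 3 (by norm_num) τ
  linear_combination this / 2

lemma eu_neg_three (τ : ℂ) : ms 6 (-3) (1 / 12) sg 0 τ 0 = 0 := by
  have := ms_reflect 6 (-3) (1 / 12) (ε := sg) 1 (-1)
    (fun n => by rw [sub_eq_add_neg, sg_add, sg_neg, sg_one]) (-3) (by norm_num) τ
  linear_combination this / 2

/-- The double sum splits over the cosets of a sublattice of index three; one of the cosets
contributes zero by `eu_three`. -/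
lemma thetaJ_mul_Phi_zero {τ : ℂ} (hτ : 0 < τ.im) (z : ℂ) :
    thetaJ τ (2 * z) * Phi 0 τ z = eu τ * (th 1 τ z - th (-1) τ z) := by
  have two : (0 : ℝ) < 2 := two_pos
  have half : (0 : ℝ) < 1 / 2 := by norm_num
  have six : (0 : ℝ) < 6 := by norm_num
  have c1 : (0 : ℝ) < 1 / 12 := by norm_num
  have c2 : (0 : ℝ) < 1 / 6 := by norm_num
  have hL := hasSum_ms_mul one_pos (1 / 2) one_pos two 0 half norm_sg norm_tr hτ (2 * z) z
  have h1 := hasSum_ms_mul six 1 c1 six 1 c2 norm_sg norm_tr hτ 0 z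
  have h2 := (hasSum_ms_mul six 3 c1 six 3 c2 norm_sg norm_tr hτ 0 z).mul_left (-1)
  have h3 := (hasSum_ms_mul six (-1) c1 six (-1) c2 norm_sg norm_tr hτ 0 z).mul_left (-1)
  have main := hasSum_split_three (g₁ := fun p => (2 * p.2 + p.1, p.2 - p.1))
    (g₂ := fun p => (2 * p.2 + p.1 + 1, p.2 - p.1))
    (g₃ := fun p => (2 * p.2 + p.1 - 1, p.2 - p.1)) ?_ hL (h1.congr_fun fun p => ?_)
    (h2.congr_fun fun p => ?_) (h3.congr_fun fun p => ?_)
  · rw [thetaJ_eq, Phi, main, eu_three, eu_neg, th, th, eu]; ring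
  · constructor
    · rintro (⟨a, b⟩ | ⟨a, b⟩ | ⟨a, b⟩) (⟨c, d⟩ | ⟨c, d⟩ | ⟨c, d⟩) h <;>
        simp only [Sum.elim_inl, Sum.elim_inr, Prod.mk.injEq, Sum.inl.injEq, Sum.inr.injEq,
          reduceCtorEq] at h ⊢ <;> omega
    · rintro ⟨i, j⟩
      obtain ⟨k, hk | hk | hk⟩ : ∃ k, i + j = 3 * k ∨ i + j = 3 * k + 1 ∨ i + j = 3 * k - 1 :=
        ⟨(i + j + 1) / 3, by omega⟩
      · exact ⟨Sum.inl (k - j, k), by simp only [Sum.elim_inl, Prod.mk.injEq]; omega⟩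
      · exact ⟨Sum.inr (Sum.inl (k - j, k)), by
          simp only [Sum.elim_inl, Sum.elim_inr, Prod.mk.injEq]; omega⟩
      · exact ⟨Sum.inr (Sum.inr (k - j, k)), by
          simp only [Sum.elim_inr, Prod.mk.injEq]; omega⟩
  · refine (msTerm_mul_congr 1 τ ?_ ?_ ?_).trans (one_mul _)
    · simp only [frq]; push_cast; ring
    · simp only [frq]; push_cast; ring
    · rw [sg_add, sg_two_mul]; simp [tr]
  · apply msTerm_mul_congr
    · simp only [frq]; push_cast; ring
    · simp only [frq]; push_cast; ring
    · rw [sg_add, sg_add, sg_two_mul, sg_one]; simp [tr]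
  · apply msTerm_mul_congr
    · simp only [frq]; push_cast; ring
    · simp only [frq]; push_cast; ring
    · rw [sub_eq_add_neg, sg_add, sg_add, sg_two_mul, sg_neg, sg_one]; simp [tr]

lemma thetaJ_mul_Phi_one {τ : ℂ} (hτ : 0 < τ.im) (z : ℂ) :
    thetaJ τ (2 * z) * Phi 1 τ z = eu τ * (th 2 τ z - th (-2) τ z) := by
  have two : (0 : ℝ) < 2 := two_pos
  have half : (0 : ℝ) < 1 / 2 := by norm_num
  have six : (0 : ℝ) < 6 := by norm_num
  have c1 : (0 : ℝ) < 1 / 12 := by norm_num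
  have c2 : (0 : ℝ) < 1 / 6 := by norm_num
  have hL := hasSum_ms_mul one_pos (1 / 2) one_pos two 1 half norm_sg norm_tr hτ (2 * z) z
  have h1 := hasSum_ms_mul six (-1) c1 six 2 c2 norm_sg norm_tr hτ 0 z
  have h2 := (hasSum_ms_mul six 1 c1 six (-2) c2 norm_sg norm_tr hτ 0 z).mul_left (-1)
  have h3 := (hasSum_ms_mul six (-3) c1 six 0 c2 norm_sg norm_tr hτ 0 z).mul_left (-1)
  have main := hasSum_split_three (g₁ := fun p => (2 * p.2 + p.1, p.2 - p.1))
    (g₂ := fun p => (2 * p.2 + p.1 - 1, p.2 - p.1 - 1))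
    (g₃ := fun p => (2 * p.2 + p.1 - 1, p.2 - p.1)) ?_ hL (h1.congr_fun fun p => ?_)
    (h2.congr_fun fun p => ?_) (h3.congr_fun fun p => ?_)
  · rw [thetaJ_eq, Phi, main, eu_neg_three, eu_neg, th, th, eu]; ring
  · constructor
    · rintro (⟨a, b⟩ | ⟨a, b⟩ | ⟨a, b⟩) (⟨c, d⟩ | ⟨c, d⟩ | ⟨c, d⟩) h <;>
        simp only [Sum.elim_inl, Sum.elim_inr, Prod.mk.injEq, Sum.inl.injEq, Sum.inr.injEq,
          reduceCtorEq] at h ⊢ <;> omega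
    · rintro ⟨i, j⟩
      obtain ⟨k, hk | hk | hk⟩ : ∃ k, i + j = 3 * k ∨ i + j = 3 * k - 2 ∨ i + j = 3 * k - 1 :=
        ⟨(i + j + 2) / 3, by omega⟩
      · exact ⟨Sum.inl (k - j, k), by simp only [Sum.elim_inl, Prod.mk.injEq]; omega⟩
      · exact ⟨Sum.inr (Sum.inl (k - j - 1, k)), by
          simp only [Sum.elim_inl, Sum.elim_inr, Prod.mk.injEq]; omega⟩
      · exact ⟨Sum.inr (Sum.inr (k - j, k)), by
          simp only [Sum.elim_inr, Prod.mk.injEq]; omega⟩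
  · refine (msTerm_mul_congr 1 τ ?_ ?_ ?_).trans (one_mul _)
    · simp only [frq]; push_cast; ring
    · simp only [frq]; push_cast; ring
    · rw [sg_add, sg_two_mul]; simp [tr]
  · apply msTerm_mul_congr
    · simp only [frq]; push_cast; ring
    · simp only [frq]; push_cast; ring
    · rw [sub_eq_add_neg, sg_add, sg_add, sg_two_mul, sg_neg, sg_one]; simp [tr]
  · apply msTerm_mul_congr
    · simp only [frq]; push_cast; ring
    · simp only [frq]; push_cast; ring
    · rw [sub_eq_add_neg, sg_add, sg_add, sg_two_mul, sg_neg, sg_one]; simp [tr]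

/-- The odd theta functions `Θ_r = θ_r - θ_{-r}` of index 3. -/
def Th (r : ℝ) (τ z : ℂ) : ℂ := th r τ z - th (-r) τ z

/-- The coefficient of `Θ₁` in the theta decomposition of `ϑ(τ,2z)ϑ(τ,z)²`. -/
def hc1 (τ : ℂ) : ℂ := -(eu τ * Phi 1 τ 0)

/-- The coefficient of `Θ₂` in the theta decomposition of `ϑ(τ,2z)ϑ(τ,z)²`. -/
def hc2 (τ : ℂ) : ℂ := eu τ * Phi 0 τ 0

lemma theta_decomposition {τ : ℂ} (hτ : 0 < τ.im) (z : ℂ) :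
    thetaJ τ (2 * z) * thetaJ τ z ^ 2 = hc1 τ * Th 1 τ z + hc2 τ * Th 2 τ z := by
  rw [thetaJ_sq hτ, Th, Th, hc1, hc2]
  linear_combination -Phi 1 τ 0 * thetaJ_mul_Phi_zero hτ z + Phi 0 τ 0 * thetaJ_mul_Phi_one hτ z

open UpperHalfPlane (upperHalfPlaneSet isOpen_upperHalfPlaneSet)

/-! ### The derivation `q d/dq` -/

/-- The derivation `(2πi)⁻¹ d/dτ = q d/dq`. -/
def Dq (f : ℂ → ℂ) (τ : ℂ) : ℂ := deriv f τ / (2 * π * I)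

lemma two_pi_I_ne : (2 * π * I : ℂ) ≠ 0 := Complex.two_pi_I_ne_zero

lemma Dq_mul {f g : ℂ → ℂ} (hf : DifferentiableOn ℂ f upperHalfPlaneSet)
    (hg : DifferentiableOn ℂ g upperHalfPlaneSet) {τ : ℂ} (hτ : τ ∈ upperHalfPlaneSet) :
    Dq (fun t => f t * g t) τ = Dq f τ * g τ + f τ * Dq g τ := by
  have h1 := hf.differentiableAt (isOpen_upperHalfPlaneSet.mem_nhds hτ)
  have h2 := hg.differentiableAt (isOpen_upperHalfPlaneSet.mem_nhds hτ)
  simp only [Dq]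
  rw [deriv_fun_mul h1 h2]; ring

lemma Dq_add {f g : ℂ → ℂ} (hf : DifferentiableOn ℂ f upperHalfPlaneSet)
    (hg : DifferentiableOn ℂ g upperHalfPlaneSet) {τ : ℂ} (hτ : τ ∈ upperHalfPlaneSet) :
    Dq (fun t => f t + g t) τ = Dq f τ + Dq g τ := by
  have h1 := hf.differentiableAt (isOpen_upperHalfPlaneSet.mem_nhds hτ)
  have h2 := hg.differentiableAt (isOpen_upperHalfPlaneSet.mem_nhds hτ)
  simp only [Dq]
  rw [deriv_fun_add h1 h2]; ring

lemma Dq_const_mul {f : ℂ → ℂ} (c : ℂ) (τ : ℂ) : Dq (fun t => c * f t) τ = c * Dq f τ := by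
  simp only [Dq]
  rw [deriv_const_mul_field]; ring

lemma Dq_congr {f g : ℂ → ℂ} (h : ∀ t ∈ upperHalfPlaneSet, f t = g t) {τ : ℂ}
    (hτ : τ ∈ upperHalfPlaneSet) : Dq f τ = Dq g τ := by
  have : f =ᶠ[nhds τ] g := by
    filter_upwards [isOpen_upperHalfPlaneSet.mem_nhds hτ] with t ht using h t ht
  rw [Dq, Dq, this.deriv_eq]

lemma Dq_diff {f : ℂ → ℂ} (hf : DifferentiableOn ℂ f upperHalfPlaneSet) :
    DifferentiableOn ℂ (Dq f) upperHalfPlaneSet :=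
  (hf.deriv isOpen_upperHalfPlaneSet).div_const _

/-! ### Derivatives of theta series -/

lemma ms_diff {N κ : ℝ} (hN : 0 < N) (a : ℝ) (hκ : 0 < κ) {ε : ℤ → ℂ}
    (hε : ∀ n, ‖ε n‖ ≤ 1) (k : ℕ) (z : ℂ) :
    DifferentiableOn ℂ (fun t => ms N a κ ε k t z) upperHalfPlaneSet := fun _ ht =>
  (ms_hasDerivAt_τ hN a hκ hε k ht z).differentiableAt.differentiableWithinAt

lemma Dq_ms {N κ : ℝ} (hN : 0 < N) (a : ℝ) (hκ : 0 < κ) {ε : ℤ → ℂ}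
    (hε : ∀ n, ‖ε n‖ ≤ 1) (k : ℕ) (z : ℂ) {τ : ℂ} (hτ : τ ∈ upperHalfPlaneSet) :
    Dq (fun t => ms N a κ ε k t z) τ = κ / 2 * ms N a κ ε (k + 2) τ z := by
  rw [Dq, (ms_hasDerivAt_τ hN a hκ hε k hτ z).deriv]
  have := two_pi_I_ne
  field_simp

lemma iteratedDeriv_ms {N κ : ℝ} (hN : 0 < N) (a : ℝ) (hκ : 0 < κ) {ε : ℤ → ℂ}
    (hε : ∀ n, ‖ε n‖ ≤ 1) {τ : ℂ} (hτ : 0 < τ.im) (n : ℕ) :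
    iteratedDeriv n (ms N a κ ε 0 τ) = fun z => (2 * π * I) ^ n * ms N a κ ε n τ z := by
  induction n with
  | zero => simp
  | succ n ih =>
    rw [iteratedDeriv_succ, ih]
    ext z
    rw [deriv_const_mul_field, (ms_hasDerivAt_z hN a hκ hε n hτ z).deriv]
    ring

lemma ms_differentiable {N κ : ℝ} (hN : 0 < N) (a : ℝ) (hκ : 0 < κ) {ε : ℤ → ℂ}
    (hε : ∀ n, ‖ε n‖ ≤ 1) {τ : ℂ} (hτ : 0 < τ.im) (k : ℕ) :
    Differentiable ℂ (ms N a κ ε k τ) := fun z =>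
  (ms_hasDerivAt_z hN a hκ hε k hτ z).differentiableAt

/-- The `k`-th derivative `(2πi)^{-k} ∂_z^k` of the odd theta function `Θ_r`. -/
def Tk (r : ℝ) (k : ℕ) (τ z : ℂ) : ℂ :=
  ms 6 r (1 / 6) tr k τ z - ms 6 (-r) (1 / 6) tr k τ z

lemma Th_eq (r : ℝ) (τ z : ℂ) : Th r τ z = Tk r 0 τ z := rfl

lemma Tk_hasDerivAt_z (r : ℝ) (k : ℕ) {τ : ℂ} (hτ : 0 < τ.im) (z : ℂ) :
    HasDerivAt (Tk r k τ) (2 * π * I * Tk r (k + 1) τ z) z := by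
  have := (ms_hasDerivAt_z (by norm_num : (0 : ℝ) < 6) r (by norm_num : (0 : ℝ) < 1 / 6)
    norm_tr k hτ z).sub (ms_hasDerivAt_z (by norm_num : (0 : ℝ) < 6) (-r)
    (by norm_num : (0 : ℝ) < 1 / 6) norm_tr k hτ z)
  rw [← mul_sub] at this
  exact this

lemma Tk_hasDerivAt_τ (r : ℝ) (k : ℕ) {τ : ℂ} (hτ : 0 < τ.im) (z : ℂ) :
    HasDerivAt (fun t => Tk r k t z) (2 * π * I * (1 / 12 * Tk r (k + 2) τ z)) τ := by
  have := (ms_hasDerivAt_τ (by norm_num : (0 : ℝ) < 6) r (by norm_num : (0 : ℝ) < 1 / 6)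
    norm_tr k hτ z).sub (ms_hasDerivAt_τ (by norm_num : (0 : ℝ) < 6) (-r)
    (by norm_num : (0 : ℝ) < 1 / 6) norm_tr k hτ z)
  convert! this using 1
  rw [Tk]; push_cast; ring

lemma Tk_diff (r : ℝ) (k : ℕ) (z : ℂ) :
    DifferentiableOn ℂ (fun t => Tk r k t z) upperHalfPlaneSet := fun _ ht =>
  (Tk_hasDerivAt_τ r k ht z).differentiableAt.differentiableWithinAt

lemma Dq_Tk (r : ℝ) (k : ℕ) (z : ℂ) {τ : ℂ} (hτ : τ ∈ upperHalfPlaneSet) :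
    Dq (fun t => Tk r k t z) τ = 1 / 12 * Tk r (k + 2) τ z := by
  rw [Dq, (Tk_hasDerivAt_τ r k hτ z).deriv, mul_div_cancel_left₀ _ two_pi_I_ne]

lemma iteratedDeriv_Tk (r : ℝ) {τ : ℂ} (hτ : 0 < τ.im) (n : ℕ) :
    iteratedDeriv n (Tk r 0 τ) = fun z => (2 * π * I) ^ n * Tk r n τ z := by
  induction n with
  | zero => simp
  | succ n ih =>
    rw [iteratedDeriv_succ, ih]
    ext z
    rw [deriv_const_mul_field, (Tk_hasDerivAt_z r n hτ z).deriv]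
    ring

/-! ### The heat operator on theta decompositions -/

/-- Since `Θ₁` and `Θ₂` are annihilated by the heat operator of index 3, the modular heat
operator acts on a combination of them through the coefficients only. -/
lemma heatMod_decomposition (k : ℚ) {φ : ℂ → ℂ → ℂ} {g₁ g₂ : ℂ → ℂ}
    (hφ : ∀ t ∈ upperHalfPlaneSet, ∀ w, φ t w = g₁ t * Tk 1 0 t w + g₂ t * Tk 2 0 t w)
    (hg₁ : DifferentiableOn ℂ g₁ upperHalfPlaneSet)
    (hg₂ : DifferentiableOn ℂ g₂ upperHalfPlaneSet) {τ : ℂ} (hτ : τ ∈ upperHalfPlaneSet) (z : ℂ) :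
    heatMod 3 k φ τ z =
      (12 * Dq g₁ τ - (2 * (k : ℂ) - 1) / 2 * Eis2 τ * g₁ τ) * Tk 1 0 τ z +
      (12 * Dq g₂ τ - (2 * (k : ℂ) - 1) / 2 * Eis2 τ * g₂ τ) * Tk 2 0 τ z := by
  have hτ' : 0 < τ.im := hτ
  have e1 : deriv (fun t => φ t z) τ / (2 * π * I) =
      (Dq g₁ τ * Tk 1 0 τ z + g₁ τ * (1 / 12 * Tk 1 2 τ z)) +
      (Dq g₂ τ * Tk 2 0 τ z + g₂ τ * (1 / 12 * Tk 2 2 τ z)) := by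
    change Dq (fun t => φ t z) τ = _
    rw [Dq_congr (fun t ht => hφ t ht z) hτ,
      Dq_add (hg₁.fun_mul (Tk_diff 1 0 z)) (hg₂.fun_mul (Tk_diff 2 0 z)) hτ,
      Dq_mul hg₁ (Tk_diff 1 0 z) hτ, Dq_mul hg₂ (Tk_diff 2 0 z) hτ, Dq_Tk _ _ _ hτ, Dq_Tk _ _ _ hτ]
  have e2 : deriv (deriv (φ τ)) z =
      (2 * π * I) ^ 2 * (g₁ τ * Tk 1 2 τ z + g₂ τ * Tk 2 2 τ z) := by
    have a0 : φ τ = fun w => g₁ τ * Tk 1 0 τ w + g₂ τ * Tk 2 0 τ w := funext (hφ τ hτ)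
    have a1 : deriv (φ τ) = fun w =>
        g₁ τ * (2 * π * I * Tk 1 1 τ w) + g₂ τ * (2 * π * I * Tk 2 1 τ w) := by
      rw [a0]; ext w
      exact (((Tk_hasDerivAt_z 1 0 hτ' w).const_mul _).add
        ((Tk_hasDerivAt_z 2 0 hτ' w).const_mul _)).deriv
    rw [a1]
    rw [HasDerivAt.deriv (((((Tk_hasDerivAt_z 1 1 hτ' z).const_mul (2 * π * I)).const_mul
      (g₁ τ)).fun_add (((Tk_hasDerivAt_z 2 1 hτ' z).const_mul (2 * π * I)).const_mul (g₂ τ))))]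
    ring
  have hpi : (π : ℂ) ≠ 0 := by exact_mod_cast Real.pi_ne_zero
  have e3 : 3 / (4 * π ^ 2 * (((3 : ℚ)) : ℂ)) * (2 * π * I) ^ 2 = -1 := by
    push_cast
    rw [mul_pow, I_sq]; field_simp; ring
  rw [heatMod, heatOp, e2, hφ τ hτ z]
  linear_combination 12 * e1 + (g₁ τ * Tk 1 2 τ z + g₂ τ * Tk 2 2 τ z) * e3

/-- The ordinary differential operator on coefficients attached to the Kaneko–Zagier equation. -/
def KZ (h : ℂ → ℂ) (τ : ℂ) : ℂ :=
  144 * Dq (Dq h) τ - 12 * Dq Eis2 τ * h τ - 48 * Eis2 τ * Dq h τ + 3 * Eis2 τ ^ 2 * h τ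
    - 5 / 4 * Eis4 τ * h τ

lemma second_coeff (h : ℂ → ℂ) (hE : DifferentiableOn ℂ Eis2 upperHalfPlaneSet)
    (hh : DifferentiableOn ℂ h upperHalfPlaneSet) {τ : ℂ} (hτ : τ ∈ upperHalfPlaneSet) :
    12 * Dq (fun t => 12 * Dq h t + -1 * (Eis2 t * h t)) τ
      - 3 * Eis2 τ * (12 * Dq h τ + -1 * (Eis2 τ * h τ)) = KZ h τ + 5 / 4 * Eis4 τ * h τ := by
  rw [Dq_add ((Dq_diff hh).const_mul 12) ((hE.fun_mul hh).const_mul (-1)) hτ, Dq_const_mul,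
    Dq_const_mul, Dq_mul hE hh hτ, KZ]
  ring

lemma eu_diff : DifferentiableOn ℂ eu upperHalfPlaneSet :=
  ms_diff (by norm_num) 1 (by norm_num) norm_sg 0 0

lemma Phi_diff (r : ℝ) : DifferentiableOn ℂ (fun τ => Phi r τ 0) upperHalfPlaneSet :=
  ms_diff (by norm_num) r (by norm_num) norm_tr 0 0

lemma hc1_diff : DifferentiableOn ℂ hc1 upperHalfPlaneSet := (eu_diff.mul (Phi_diff 1)).neg

lemma hc2_diff : DifferentiableOn ℂ hc2 upperHalfPlaneSet := eu_diff.mul (Phi_diff 0)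

/-- The left-hand side of the Kaneko–Zagier type equation, in terms of the theta decomposition. -/
lemma heat_equation_eq (hE : DifferentiableOn ℂ Eis2 upperHalfPlaneSet) {τ : ℂ}
    (hτ : τ ∈ upperHalfPlaneSet) (z : ℂ) :
    heatMod 3 (7/2) (heatMod 3 (3/2) (fun t w => thetaJ t (2 * w) * thetaJ t w ^ 2)) τ z
      - (5/4) * Eis4 τ * (thetaJ τ (2 * z) * thetaJ τ z ^ 2) =
      KZ hc1 τ * Tk 1 0 τ z + KZ hc2 τ * Tk 2 0 τ z := by
  have h1 : ∀ t ∈ upperHalfPlaneSet, ∀ w,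
      heatMod 3 (3/2) (fun t w => thetaJ t (2 * w) * thetaJ t w ^ 2) t w =
      (12 * Dq hc1 t + -1 * (Eis2 t * hc1 t)) * Tk 1 0 t w +
      (12 * Dq hc2 t + -1 * (Eis2 t * hc2 t)) * Tk 2 0 t w := by
    intro t ht w
    rw [heatMod_decomposition (3/2) (fun t ht w => theta_decomposition ht w) hc1_diff hc2_diff ht w]
    push_cast
    ring
  have hd : ∀ h : ℂ → ℂ, DifferentiableOn ℂ h upperHalfPlaneSet →
      DifferentiableOn ℂ (fun t => 12 * Dq h t + -1 * (Eis2 t * h t)) upperHalfPlaneSet :=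
    fun h hh => ((Dq_diff hh).const_mul 12).add ((hE.mul hh).const_mul (-1))
  rw [heatMod_decomposition (7/2) h1 (hd _ hc1_diff) (hd _ hc2_diff) hτ z,
    theta_decomposition hτ, Th_eq, Th_eq]
  have s1 := second_coeff hc1 hE hc1_diff hτ
  have s2 := second_coeff hc2 hE hc2_diff hτ
  push_cast
  linear_combination Tk 1 0 τ z * s1 + Tk 2 0 τ z * s2

/-! ### Taylor coefficients at `z = 0` -/

/-- Taylor coefficients at the origin of `f(2z) f(z)²` for an entire function `f` whose
Taylor coefficients of order 0, 2, 4 and 6 vanish. -/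
lemma taylor_cubic {f : ℂ → ℂ} (hf : Differentiable ℂ f)
    (h0 : iteratedDeriv 0 f 0 = 0) (h2 : iteratedDeriv 2 f 0 = 0) (h4 : iteratedDeriv 4 f 0 = 0)
    (h6 : iteratedDeriv 6 f 0 = 0) :
    iteratedDeriv 1 (fun z => f (2 * z) * f z ^ 2) 0 = 0 ∧
    iteratedDeriv 3 (fun z => f (2 * z) * f z ^ 2) 0 = 12 * iteratedDeriv 1 f 0 ^ 3 ∧
    iteratedDeriv 5 (fun z => f (2 * z) * f z ^ 2) 0 =
      240 * iteratedDeriv 1 f 0 ^ 2 * iteratedDeriv 3 f 0 ∧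
    iteratedDeriv 7 (fun z => f (2 * z) * f z ^ 2) 0 =
      2520 * iteratedDeriv 1 f 0 * iteratedDeriv 3 f 0 ^ 2 +
      1512 * iteratedDeriv 1 f 0 ^ 2 * iteratedDeriv 5 f 0 := by
  have hc : ∀ n : ℕ, ContDiff ℂ n f := fun n => hf.contDiff
  have hs : ∀ n : ℕ, iteratedDeriv n (fun z => f z ^ 2) 0 = ∑ i ∈ Finset.range (n + 1),
      n.choose i * iteratedDeriv i f 0 * iteratedDeriv (n - i) f 0 := fun n => by
    simp_rw [sq]
    exact iteratedDeriv_fun_mul (hc n).contDiffAt (hc n).contDiffAt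
  have hm : ∀ n : ℕ, iteratedDeriv n (fun z => f (2 * z) * f z ^ 2) 0 =
      ∑ i ∈ Finset.range (n + 1), n.choose i * (2 ^ i * iteratedDeriv i f 0) *
        iteratedDeriv (n - i) (fun z => f z ^ 2) 0 := fun n => by
    have hd : ContDiff ℂ n fun z => f (2 * z) := (hc n).comp (contDiff_const.mul contDiff_id)
    rw [iteratedDeriv_fun_mul hd.contDiffAt ((hc n).pow 2).contDiffAt]
    refine Finset.sum_congr rfl fun i _ => ?_
    rw [iteratedDeriv_comp_const_mul (hc i)]
    simp
  have s0 : iteratedDeriv 0 (fun z => f z ^ 2) 0 = 0 := by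
    simp [hs, h0]
  have s2 : iteratedDeriv 2 (fun z => f z ^ 2) 0 = 2 * iteratedDeriv 1 f 0 ^ 2 := by
    simp only [hs, Finset.sum_range_succ, Finset.sum_range_zero, Nat.choose, h0, h2]
    push_cast; ring
  have s4 : iteratedDeriv 4 (fun z => f z ^ 2) 0 =
      8 * iteratedDeriv 1 f 0 * iteratedDeriv 3 f 0 := by
    simp only [hs, Finset.sum_range_succ, Finset.sum_range_zero, Nat.choose, h0, h2, h4]
    push_cast; ring
  have s6 : iteratedDeriv 6 (fun z => f z ^ 2) 0 =
      20 * iteratedDeriv 3 f 0 ^ 2 + 12 * iteratedDeriv 1 f 0 * iteratedDeriv 5 f 0 := by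
    simp only [hs, Finset.sum_range_succ, Finset.sum_range_zero, Nat.choose, h0, h2, h4, h6]
    push_cast; ring
  refine ⟨?_, ?_, ?_, ?_⟩
  · simp only [hm, Finset.sum_range_succ, Finset.sum_range_zero, Nat.choose, h0, s0]
    push_cast; ring
  · simp only [hm, Finset.sum_range_succ, Finset.sum_range_zero, Nat.choose, h0, h2, s0, s2]
    push_cast; ring
  · simp only [hm, Finset.sum_range_succ, Finset.sum_range_zero, Nat.choose, h0, h2, h4, s0, s2, s4]
    push_cast; ring
  · simp only [hm, Finset.sum_range_succ, Finset.sum_range_zero, Nat.choose, h0, h2, h4, h6, s0, s2,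
      s4, s6]
    push_cast; ring

/-- The Taylor coefficients `(2πi)^{-k} ∂_z^k ϑ(τ,0)`. -/
def tj (k : ℕ) (τ : ℂ) : ℂ := ms 1 (1 / 2) 1 sg k τ 0

lemma tj_diff (k : ℕ) : DifferentiableOn ℂ (tj k) upperHalfPlaneSet :=
  ms_diff one_pos _ one_pos norm_sg k 0

lemma Dq_tj (k : ℕ) {τ : ℂ} (hτ : τ ∈ upperHalfPlaneSet) : Dq (tj k) τ = 1 / 2 * tj (k + 2) τ := by
  have := Dq_ms one_pos (1 / 2) one_pos norm_sg k 0 hτ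
  rw [ofReal_one] at this
  exact this

lemma tj_even (k : ℕ) (τ : ℂ) : tj (2 * k) τ = 0 := by
  have : tj (2 * k) τ = -tj (2 * k) τ := by
    conv_lhs => rw [tj, ms, ← (Equiv.subLeft (-1 : ℤ)).tsum_eq]
    rw [tj, ms, ← tsum_neg]
    congr 1; ext n
    have e : frq 1 (1 / 2) (-1 - n) = -frq 1 (1 / 2) n := by simp only [frq]; push_cast; ring
    have e' : sg (-1 - n) = -sg n := by rw [sub_eq_add_neg, sg_add, sg_neg, sg_neg, sg_one]; ring
    simp only [Equiv.subLeft_apply, msTerm, e, e', pow_mul, ofReal_neg, neg_sq, mul_zero, zero_mul]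
    ring
  linear_combination this / 2

/-- The pairing of a pair of coefficient functions with the `k`-th Taylor coefficients of
`(Θ₁, Θ₂)` at `z = 0`. -/
def pr (g₁ g₂ : ℂ → ℂ) (k : ℕ) (τ : ℂ) : ℂ := g₁ τ * Tk 1 k τ 0 + g₂ τ * Tk 2 k τ 0

/-- The Taylor coefficients at `z = 0` of `ϑ(τ,2z)ϑ(τ,z)² = h₁ Θ₁ + h₂ Θ₂`, by the coefficients
of `ϑ`. -/
lemma taylor_theta {τ : ℂ} (hτ : 0 < τ.im) :
    pr hc1 hc2 1 τ = 0 ∧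
    pr hc1 hc2 3 τ = 12 * tj 1 τ ^ 3 ∧
    pr hc1 hc2 5 τ = 240 * tj 1 τ ^ 2 * tj 3 τ ∧
    pr hc1 hc2 7 τ = 2520 * tj 1 τ * tj 3 τ ^ 2 + 1512 * tj 1 τ ^ 2 * tj 5 τ := by
  have hi : ∀ n, iteratedDeriv n (thetaJ τ) 0 = (2 * π * I) ^ n * tj n τ := fun n => by
    rw [show thetaJ τ = ms 1 (1 / 2) 1 sg 0 τ from funext (thetaJ_eq τ),
      iteratedDeriv_ms one_pos _ one_pos norm_sg hτ, tj]
  have hz : ∀ k, iteratedDeriv (2 * k) (thetaJ τ) 0 = 0 := fun k => by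
    rw [hi, tj_even, mul_zero]
  have hd : Differentiable ℂ (thetaJ τ) := by
    rw [show thetaJ τ = ms 1 (1 / 2) 1 sg 0 τ from funext (thetaJ_eq τ)]
    exact ms_differentiable one_pos _ one_pos norm_sg hτ 0
  have hG : (fun z => thetaJ τ (2 * z) * thetaJ τ z ^ 2) =
      (fun z => hc1 τ * Tk 1 0 τ z) + fun z => hc2 τ * Tk 2 0 τ z :=
    funext fun z => theta_decomposition hτ z
  have hT : ∀ r, Differentiable ℂ (Tk r 0 τ) := fun r z =>
    (Tk_hasDerivAt_z r 0 hτ z).differentiableAt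
  have hp : ∀ n : ℕ, iteratedDeriv n (fun z => thetaJ τ (2 * z) * thetaJ τ z ^ 2) 0 =
      (2 * π * I) ^ n * pr hc1 hc2 n τ := fun n => by
    rw [hG, iteratedDeriv_add ((hT 1).const_mul _).contDiff.contDiffAt
      ((hT 2).const_mul _).contDiff.contDiffAt, iteratedDeriv_const_mul_field,
      iteratedDeriv_const_mul_field, iteratedDeriv_Tk _ hτ, iteratedDeriv_Tk _ hτ, pr]
    ring
  obtain ⟨a, b, c, d⟩ := taylor_cubic hd (hz 0) (hz 1) (hz 2) (hz 3)
  rw [hp, hi] at *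
  simp only [hi] at b c d
  have hne := two_pi_I_ne
  refine ⟨?_, ?_, ?_, ?_⟩
  · simpa [hne] using a
  · refine mul_left_cancel₀ (pow_ne_zero 3 hne) (b.trans ?_); ring
  · refine mul_left_cancel₀ (pow_ne_zero 5 hne) (c.trans ?_); ring
  · refine mul_left_cancel₀ (pow_ne_zero 7 hne) (d.trans ?_); ring

lemma pr_diff {g₁ g₂ : ℂ → ℂ} (hg₁ : DifferentiableOn ℂ g₁ upperHalfPlaneSet)
    (hg₂ : DifferentiableOn ℂ g₂ upperHalfPlaneSet) (k : ℕ) :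
    DifferentiableOn ℂ (pr g₁ g₂ k) upperHalfPlaneSet :=
  (hg₁.mul (Tk_diff 1 k 0)).add (hg₂.mul (Tk_diff 2 k 0))

lemma Dq_pr {g₁ g₂ : ℂ → ℂ} (hg₁ : DifferentiableOn ℂ g₁ upperHalfPlaneSet)
    (hg₂ : DifferentiableOn ℂ g₂ upperHalfPlaneSet) (k : ℕ) {τ : ℂ} (hτ : τ ∈ upperHalfPlaneSet) :
    Dq (pr g₁ g₂ k) τ = pr (Dq g₁) (Dq g₂) k τ + 1 / 12 * pr g₁ g₂ (k + 2) τ := by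
  have e : pr g₁ g₂ k = fun t => g₁ t * Tk 1 k t 0 + g₂ t * Tk 2 k t 0 := rfl
  rw [e, Dq_add (hg₁.fun_mul (Tk_diff 1 k 0)) (hg₂.fun_mul (Tk_diff 2 k 0)) hτ,
    Dq_mul hg₁ (Tk_diff 1 k 0) hτ, Dq_mul hg₂ (Tk_diff 2 k 0) hτ, Dq_Tk _ _ _ hτ, Dq_Tk _ _ _ hτ,
    pr, pr]
  ring

/-- The coefficients of the theta decomposition solve the Kaneko–Zagier equation: the vectors of
first and third Taylor coefficients of `(Θ₁, Θ₂)` are linearly independent, and both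
pair to zero with `(KZ hc1, KZ hc2)`. -/
lemma KZ_eq_zero (hE : DifferentiableOn ℂ Eis2 upperHalfPlaneSet)
    (hR : ∀ t ∈ upperHalfPlaneSet, Dq Eis2 t = (Eis2 t ^ 2 - Eis4 t) / 12)
    (ht : ∀ t ∈ upperHalfPlaneSet, Dq (tj 1) t = Eis2 t / 8 * tj 1 t)
    (ht0 : ∀ t ∈ upperHalfPlaneSet, tj 1 t ≠ 0) {τ : ℂ} (hτ : τ ∈ upperHalfPlaneSet) :
    KZ hc1 τ = 0 ∧ KZ hc2 τ = 0 := by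
  have d1 := hc1_diff
  have d2 := hc2_diff
  have hcube : DifferentiableOn ℂ (fun t => tj 1 t ^ 3) upperHalfPlaneSet := (tj_diff 1).pow 3
  have Dcube : ∀ t ∈ upperHalfPlaneSet,
      Dq (fun t => tj 1 t ^ 3) t = 3 / 8 * Eis2 t * tj 1 t ^ 3 := fun t h => by
    have e : (fun t => tj 1 t ^ 3) = fun t => tj 1 t * (tj 1 t * tj 1 t) := by ext t; ring
    rw [e, Dq_mul (tj_diff 1) ((tj_diff 1).fun_mul (tj_diff 1)) h,
      Dq_mul (tj_diff 1) (tj_diff 1) h, ht t h]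
    ring
  have DPcube : ∀ t ∈ upperHalfPlaneSet, Dq (fun t => Eis2 t * tj 1 t ^ 3) t =
      ((Eis2 t ^ 2 - Eis4 t) / 12 + 3 / 8 * Eis2 t ^ 2) * tj 1 t ^ 3 := fun t h => by
    rw [Dq_mul hE hcube h, hR t h, Dcube t h]; ring
  have t3 : ∀ t ∈ upperHalfPlaneSet, tj 3 t = Eis2 t / 4 * tj 1 t := fun t h => by
    linear_combination 2 * ht t h - 2 * Dq_tj 1 h
  have t5 : ∀ t ∈ upperHalfPlaneSet, tj 5 t = (5 * Eis2 t ^ 2 - 2 * Eis4 t) / 48 * tj 1 t :=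
    fun t h => by
      have e : Dq (tj 3) t = Dq (fun t => 1 / 4 * (Eis2 t * tj 1 t)) t :=
        Dq_congr (fun s hs => by rw [t3 s hs]; ring) h
      rw [Dq_const_mul, Dq_mul hE (tj_diff 1) h, hR t h, ht t h, Dq_tj 3 h] at e
      linear_combination 2 * e
  have S1 : ∀ t ∈ upperHalfPlaneSet, pr hc1 hc2 1 t = 0 := fun t h => (taylor_theta h).1
  have S3 : ∀ t ∈ upperHalfPlaneSet, pr hc1 hc2 3 t = 12 * tj 1 t ^ 3 :=
    fun t h => (taylor_theta h).2.1
  have S5 : ∀ t ∈ upperHalfPlaneSet, pr hc1 hc2 5 t = 60 * (Eis2 t * tj 1 t ^ 3) := fun t h => by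
    rw [(taylor_theta h).2.2.1, t3 t h]; ring
  have S7 : ∀ t ∈ upperHalfPlaneSet, pr hc1 hc2 7 t =
      9 * (35 * Eis2 t ^ 2 - 7 * Eis4 t) * tj 1 t ^ 3 := fun t h => by
    rw [(taylor_theta h).2.2.2, t3 t h, t5 t h]; ring
  have U1 : ∀ t ∈ upperHalfPlaneSet, pr (Dq hc1) (Dq hc2) 1 t = -1 * tj 1 t ^ 3 := fun t h => by
    have e : Dq (pr hc1 hc2 1) t = Dq (fun t => 0 * tj 1 t) t :=
      Dq_congr (fun s hs => by rw [S1 s hs, zero_mul]) h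
    rw [Dq_const_mul, Dq_pr d1 d2 1 h, S3 t h] at e
    linear_combination e
  have U3 : ∀ t ∈ upperHalfPlaneSet,
      pr (Dq hc1) (Dq hc2) 3 t = -1 / 2 * (Eis2 t * tj 1 t ^ 3) := fun t h => by
    have e := Dq_congr S3 h
    rw [Dq_const_mul, Dq_pr d1 d2 3 h, S5 t h, Dcube t h] at e
    linear_combination e
  have U5 : pr (Dq hc1) (Dq hc2) 5 τ = (5 * Eis2 τ ^ 2 + Eis4 τ) / 4 * tj 1 τ ^ 3 := by
    have e := Dq_congr S5 hτ
    rw [Dq_const_mul, Dq_pr d1 d2 5 hτ, S7 τ hτ, DPcube τ hτ] at e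
    linear_combination e
  have V1 : pr (Dq (Dq hc1)) (Dq (Dq hc2)) 1 τ = -1 / 3 * (Eis2 τ * tj 1 τ ^ 3) := by
    have e := Dq_congr U1 hτ
    rw [Dq_const_mul, Dq_pr (Dq_diff d1) (Dq_diff d2) 1 hτ, U3 τ hτ, Dcube τ hτ] at e
    linear_combination e
  have V3 : pr (Dq (Dq hc1)) (Dq (Dq hc2)) 3 τ =
      (-16 * Eis2 τ ^ 2 + Eis4 τ) / 48 * tj 1 τ ^ 3 := by
    have e := Dq_congr U3 hτ
    rw [Dq_const_mul, Dq_pr (Dq_diff d1) (Dq_diff d2) 3 hτ, U5, DPcube τ hτ] at e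
    linear_combination e
  have K1 : KZ hc1 τ * Tk 1 1 τ 0 + KZ hc2 τ * Tk 2 1 τ 0 = 0 := by
    have s := S1 τ hτ
    have u := U1 τ hτ
    simp only [pr] at s u V1
    rw [KZ, KZ]
    linear_combination 144 * V1 - 48 * Eis2 τ * u
      + (-12 * Dq Eis2 τ + 3 * Eis2 τ ^ 2 - 5 / 4 * Eis4 τ) * s
  have K3 : KZ hc1 τ * Tk 1 3 τ 0 + KZ hc2 τ * Tk 2 3 τ 0 = 0 := by
    have s := S3 τ hτ
    have u := U3 τ hτ
    simp only [pr] at s u V3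
    rw [KZ, KZ, hR τ hτ]
    linear_combination 144 * V3 - 48 * Eis2 τ * u
      + (-12 * ((Eis2 τ ^ 2 - Eis4 τ) / 12) + 3 * Eis2 τ ^ 2 - 5 / 4 * Eis4 τ) * s
  have s1 := S1 τ hτ
  have s3 := S3 τ hτ
  have u1 := U1 τ hτ
  simp only [pr] at s1 s3 u1
  have c0 : tj 1 τ ^ 3 ≠ 0 := pow_ne_zero 3 (ht0 τ hτ)
  -- Since `(h₁, h₂)` pairs to `0` and `12 t₁³` with the two vectors, dependence would force the first
  -- vector to vanish, but it pairs to `-t₁³` with `(D h₁, D h₂)`.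
  have hW : Tk 1 1 τ 0 * Tk 2 3 τ 0 - Tk 2 1 τ 0 * Tk 1 3 τ 0 ≠ 0 := by
    intro hW
    have a1 : 12 * tj 1 τ ^ 3 * Tk 1 1 τ 0 = 0 := by
      linear_combination hc2 τ * hW + Tk 1 3 τ 0 * s1 - Tk 1 1 τ 0 * s3
    have a2 : 12 * tj 1 τ ^ 3 * Tk 2 1 τ 0 = 0 := by
      linear_combination -hc1 τ * hW + Tk 2 3 τ 0 * s1 - Tk 2 1 τ 0 * s3
    have b1 : Tk 1 1 τ 0 = 0 := by simpa [c0, ht0 τ hτ] using a1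
    have b2 : Tk 2 1 τ 0 = 0 := by simpa [c0, ht0 τ hτ] using a2
    rw [b1, b2] at u1
    exact c0 (by linear_combination u1)
  constructor
  · refine (mul_eq_zero.mp ?_).resolve_right hW
    linear_combination Tk 2 3 τ 0 * K1 - Tk 2 1 τ 0 * K3
  · refine (mul_eq_zero.mp ?_).resolve_right hW
    linear_combination -Tk 1 3 τ 0 * K1 + Tk 1 1 τ 0 * K3

section ModularForms

open UpperHalfPlane hiding I
open Filter Topology Function ModularForm Derivative EisensteinSeries
open scoped Manifold MatrixGroups ArithmeticFunction.sigma

/-! ### Ramanujan's equation for `E₂` -/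

lemma tsum_sigmaD (k : ℕ) (z : ℍ) :
    ∑' n : ℕ+, (ArithmeticFunction.sigma k n : ℂ) * cexp (2 * π * I * z) ^ (n : ℕ) =
      ∑' n : ℕ, (sigmaD k (n + 1) : ℂ) * cexp (2 * π * I * z * (n + 1)) := by
  rw [tsum_pnat_eq_tsum_succ
    (f := fun n => (ArithmeticFunction.sigma k n : ℂ) * cexp (2 * π * I * z) ^ (n : ℕ))]
  refine tsum_congr fun n => ?_
  rw [ArithmeticFunction.sigma_apply, sigmaD, ← Complex.exp_nat_mul]
  congr 2
  push_cast
  ring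

lemma Eis2_coe (z : ℍ) : Eis2 z = E2 z := by
  rw [E2_eq_tsum_cexp, Eis2, ← tsum_sigmaD]

lemma Eis4_coe (z : ℍ) : Eis4 z = E₄ z := by
  rw [show E₄ z = _ from q_expansion_bernoulli (by norm_num) ⟨2, rfl⟩ z, Eis4, ← tsum_sigmaD,
    bernoulli_eq_bernoulli'_of_ne_one (by norm_num), bernoulli'_four]
  norm_num

lemma Eis2_eqOn : Set.EqOn Eis2 (E2 ∘ ofComplex) upperHalfPlaneSet := fun z hz => by
  rw [comp_apply, ofComplex_apply_of_im_pos hz, ← Eis2_coe]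

lemma Eis2_diff : DifferentiableOn ℂ Eis2 upperHalfPlaneSet :=
  (UpperHalfPlane.mdifferentiable_iff.mp E2_mdifferentiable).congr Eis2_eqOn

lemma Dq_Eis2 (z : ℍ) : Dq Eis2 z = normalizedDerivOfComplex E2 z := by
  rw [Dq, normalizedDerivOfComplex,
    (Eis2_eqOn.eventuallyEq_of_mem (isOpen_upperHalfPlaneSet.mem_nhds z.2)).deriv_eq, div_eq_inv_mul]

/-- A function given by a convergent `q`-series tends to the constant term at `i∞`. -/
lemma tendsto_of_hasSum {f : ℍ → ℂ} {c : ℕ → ℂ}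
    (hf : ∀ τ : ℍ, HasSum (fun m ↦ c m • Periodic.qParam 1 τ ^ m) (f τ)) :
    Tendsto f atImInfty (𝓝 (c 0)) := by
  -- the series with shifted coefficients represents `(f - c 0) / q`, which is therefore bounded
  have hg : IsBoundedAtImInfty fun τ : ℍ => (Periodic.qParam 1 τ)⁻¹ * (f τ - c 0) := by
    refine isBoundedAtImInfty_of_hasSum_qExpansion (c := fun m => c (m + 1)) one_pos fun τ => ?_
    have h1 := (hasSum_nat_add_iff' 1).mpr (hf τ)
    have h2 := h1.mul_left (Periodic.qParam 1 (τ : ℂ))⁻¹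
    simp only [Finset.sum_range_one, pow_zero, smul_eq_mul, mul_one] at h2
    refine h2.congr_fun fun m => ?_
    have := Periodic.qParam_ne_zero (h := 1) (τ : ℂ)
    simp only [smul_eq_mul]
    field_simp
    ring
  have hq := qParam_tendsto_atImInfty (one_pos : (0 : ℝ) < 1)
  have h3 : Tendsto (fun τ : ℍ => Periodic.qParam 1 (τ : ℂ) *
      ((Periodic.qParam 1 (τ : ℂ))⁻¹ * (f τ - c 0))) atImInfty (𝓝 0) := by
    have hq' := (Asymptotics.isLittleO_one_iff ℝ).mpr hq
    have := hq'.mul_isBigO (hg : _ =O[atImInfty] (1 : ℍ → ℝ))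
    refine (Asymptotics.isLittleO_one_iff ℝ).mp (this.congr_right fun τ => by simp)
  refine tendsto_sub_nhds_zero_iff.mp (h3.congr fun τ => ?_)
  rw [mul_inv_cancel_left₀ (Periodic.qParam_ne_zero _)]

lemma E2_tendsto : Tendsto E2 atImInfty (𝓝 1) := by
  refine tendsto_of_hasSum (c := fun m => if m = 0 then 1 else -24 * σ 1 m) fun τ => ?_
  simpa [Periodic.qParam] using hasSum_qExpansion_E2 τ

lemma E4_tendsto : Tendsto E₄ atImInfty (𝓝 1) := by
  have h := tendsto_of_hasSum (f := E₄) (c := fun m => (qExpansion 1 E₄).coeff m) fun τ =>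
    ModularForm.hasSum_qExpansion (E₄) one_pos one_mem_strictPeriods_SL τ
  simpa [E_qExpansion_coeff_zero (show 3 ≤ 4 by norm_num) ⟨2, rfl⟩] using h

/-- Cauchy's estimate: the derivative of a function that converges at `i∞` tends to zero. -/
lemma normalizedDeriv_tendsto {f : ℍ → ℂ} (hf : MDiff f) {c : ℂ}
    (h : Tendsto f atImInfty (𝓝 c)) :
    Tendsto (normalizedDerivOfComplex f) atImInfty (𝓝 0) := by
  rw [UpperHalfPlane.mdifferentiable_iff] at hf
  suffices Tendsto (fun z : ℍ => deriv (f ∘ ofComplex) z) atImInfty (𝓝 0) by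
    have := this.const_mul (2 * π * I)⁻¹
    rwa [mul_zero] at this
  rw [Metric.tendsto_nhds] at h ⊢
  intro ε hε
  have h1 := h (ε / 2) (by positivity)
  rw [atImInfty, eventually_comap, eventually_atTop] at h1
  obtain ⟨A, hA⟩ := h1
  rw [atImInfty, eventually_comap, eventually_atTop]
  refine ⟨max A 0 + 2, fun b hb z hz => ?_⟩
  have him : ∀ w ∈ Metric.closedBall (z : ℂ) 1, A ≤ w.im ∧ 0 < w.im := fun w hw => by
    rw [Metric.mem_closedBall, dist_eq_norm] at hw
    have h2 := (Complex.abs_im_le_norm (w - z)).trans hw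
    rw [Complex.sub_im, abs_le] at h2
    have h3 : (z : ℂ).im = b := hz
    have := le_max_left A 0
    have := le_max_right A 0
    constructor <;> linarith
  have key := Complex.norm_deriv_le_of_forall_mem_sphere_norm_le (c := (z : ℂ)) (R := 1)
    (C := ε / 2) (f := fun w => (f ∘ ofComplex) w - c) one_pos ?_ ?_
  · rw [dist_zero_right]
    rw [deriv_sub_const, div_one] at key
    exact key.trans_lt (by linarith)
  · refine DifferentiableOn.diffContOnCl (s := Metric.ball (z : ℂ) 1) ?_
    rw [closure_ball _ one_ne_zero]
    exact (hf.mono fun w hw => (him w hw).2).sub_const c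
  · intro w hw
    obtain ⟨h2, h3⟩ := him w (Metric.sphere_subset_closedBall hw)
    have := hA _ h2 ⟨w, h3⟩ rfl
    rw [dist_eq_norm] at this
    rw [comp_apply, ofComplex_apply_of_im_pos h3]
    exact this.le

/-- The cocycle `c / (2πi (cτ + d))` measuring the failure of modularity of `E₂`. -/
def coc (γ : SL(2, ℤ)) (z : ℍ) : ℂ := (2 * π * I)⁻¹ * ((γ 1 0 : ℂ) / denom γ z)

lemma E2_slash (γ : SL(2, ℤ)) : E2 ∣[(2 : ℤ)] γ = E2 + (12 : ℂ) • coc γ := by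
  rw [E2_slash_action]
  ext z
  simp only [Pi.sub_apply, Pi.add_apply, Pi.smul_apply, smul_eq_mul, D2, coc, riemannZeta_two]
  have : denom (γ : GL (Fin 2) ℝ) z ≠ 0 := denom_ne_zero _ _
  have hp : (π : ℂ) ≠ 0 := by exact_mod_cast Real.pi_ne_zero
  field_simp
  ring_nf
  simp [I_sq]

lemma deriv_coc (γ : SL(2, ℤ)) (z : ℍ) :
    HasDerivAt (coc γ ∘ ofComplex) (-(2 * π * I) * coc γ z ^ 2) z := by
  have h := (hasDerivAt_denom_zpow (γ : GL (Fin 2) ℝ) (-1) z).const_mul ((2 * π * I)⁻¹ * (γ 1 0 : ℂ))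
  refine (h.congr_deriv ?_).congr_of_eventuallyEq ?_
  · have := two_pi_I_ne
    have h2 : denom (γ : GL (Fin 2) ℝ) z ≠ 0 := denom_ne_zero _ _
    simp [coc]
    field_simp
    simp [I_sq]
  · filter_upwards [isOpen_upperHalfPlaneSet.mem_nhds z.2] with w hw
    simp [coc, ofComplex_apply_of_im_pos hw, zpow_neg]
    ring

lemma normalizedDeriv_coc (γ : SL(2, ℤ)) (z : ℍ) :
    normalizedDerivOfComplex (coc γ) z = -coc γ z ^ 2 := by
  have := two_pi_I_ne
  rw [normalizedDerivOfComplex, (deriv_coc γ z).deriv]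
  field_simp

lemma coc_mdiff (γ : SL(2, ℤ)) : MDiff (coc γ) := by
  rw [UpperHalfPlane.mdifferentiable_iff]
  intro z hz
  exact (deriv_coc γ ⟨z, hz⟩).differentiableAt.differentiableWithinAt

/-- The combination `D E₂ - E₂² / 12`, which is modular of weight four. -/
def ram : ℍ → ℂ := serreDerivative 1 E2

lemma ram_apply (z : ℍ) : ram z = normalizedDerivOfComplex E2 z - E2 z ^ 2 / 12 := by
  rw [ram, serreDerivative_apply]; ring

lemma ram_slash (γ : SL(2, ℤ)) : ram ∣[(4 : ℤ)] γ = ram := by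
  ext z
  have h1 := congrFun (normalizedDerivOfComplex_SL_slash (k := 2) E2_mdifferentiable (γ := γ)) z
  have h2 : (ram ∣[(4 : ℤ)] γ) z = (normalizedDerivOfComplex E2 ∣[(4 : ℤ)] γ) z -
      12⁻¹ * ((E2 ∣[(2 : ℤ)] γ) z * (E2 ∣[(2 : ℤ)] γ) z) := by
    have h3 := congrFun (ModularForm.mul_slash_SL2 2 2 γ E2 E2) z
    grind [ModularForm.SL_slash_apply, ram_apply, Pi.mul_apply]
  rw [E2_slash, normalizedDerivOfComplex_add _ _ E2_mdifferentiable ((coc_mdiff γ).const_smul _),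
    normalizedDerivOfComplex_smul _ _ (coc_mdiff γ)] at h1
  simp only [Pi.add_apply, Pi.sub_apply, Pi.smul_apply, smul_eq_mul, normalizedDeriv_coc] at h1
  rw [h2, ram_apply, E2_slash]
  simp only [Pi.add_apply, Pi.smul_apply, smul_eq_mul]
  have h5 : (2 : ℂ) * (2 * π * I)⁻¹ * (γ 1 0 / denom γ z) = 2 * coc γ z := by rw [coc]; ring
  push_cast at h1
  rw [h5] at h1
  norm_num at h1
  linear_combination -h1

lemma ram_tendsto : Tendsto ram atImInfty (𝓝 (-1 / 12)) := by
  have h := (normalizedDeriv_tendsto E2_mdifferentiable E2_tendsto).sub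
    ((E2_tendsto.pow 2).div_const 12)
  have e : ram = fun z => normalizedDerivOfComplex E2 z - E2 z ^ 2 / 12 := funext ram_apply
  rw [e]
  convert h using 2
  norm_num

/-- `ram` as a modular form of level one. -/
def ramForm : ModularForm 𝒮ℒ 4 where
  toFun := ram
  slash_action_eq' A hA := by
    obtain ⟨A, rfl⟩ := hA
    exact ram_slash A
  holo' := serreDerivative_mdifferentiable 1 E2_mdifferentiable
  bdd_at_cusps' hc := by
    rw [Subgroup.IsArithmetic.isCusp_iff_isCusp_SL2Z] at hc
    rw [OnePoint.isBoundedAt_iff_forall_SL2Z hc]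
    intro γ _
    rw [ram_slash]
    exact ram_tendsto.isBigO_one ℝ

lemma ram_eq (z : ℍ) : ram z = -1 / 12 * E₄ z := by
  obtain ⟨c, hc⟩ : ∃ c, c • E₄ = ramForm :=
    (finrank_eq_one_iff_of_nonzero' E₄ (E_ne_zero _ ⟨2, rfl⟩)).mp
      (Module.rank_eq_one_iff_finrank_eq_one.mp levelOne_weight_four_rank_one) _
  have h : ∀ z, c * E₄ z = ram z := fun z => DFunLike.congr_fun hc z
  have h1 := (E4_tendsto.const_mul c).congr h
  have h2 := tendsto_nhds_unique h1 ram_tendsto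
  rw [← h, ← h2, mul_one]

/-- Ramanujan's differential equation for `E₂`. -/
lemma ramanujan {t : ℂ} (ht : t ∈ upperHalfPlaneSet) :
    Dq Eis2 t = (Eis2 t ^ 2 - Eis4 t) / 12 := by
  have h1 := ram_apply ⟨t, ht⟩
  rw [ram_eq, ← Dq_Eis2, ← Eis2_coe, ← Eis4_coe] at h1
  linear_combination -h1

/-! ### The theta constant `t₁` and the Dedekind eta function -/

lemma sg_eq_exp (n : ℤ) : sg n = cexp (π * I * n) := by
  rw [sg, mul_comm, Complex.exp_int_mul, Complex.exp_pi_mul_I]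

lemma msTerm_eq_jacobi (k : ℕ) (τ : ℂ) (n : ℤ) :
    msTerm (frq 1 (1 / 2) n) 1 (sg n) k τ 0 =
      (n + 1 / 2) ^ k * (cexp (π * I * τ / 4) * jacobiTheta₂_term n (1 / 2 + τ / 2) τ) := by
  rw [msTerm, sg_eq_exp, jacobiTheta₂_term, ← Complex.exp_add, mul_right_comm, ← Complex.exp_add,
    mul_comm, frq]
  congr 1
  · push_cast; ring
  · congr 1
    push_cast; ring

lemma tj_zero_eq {τ : ℂ} : tj 0 τ = cexp (π * I * τ / 4) * jacobiTheta₂ (1 / 2 + τ / 2) τ := by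
  rw [tj, ms, jacobiTheta₂, ← tsum_mul_left]
  simp_rw [msTerm_eq_jacobi, pow_zero, one_mul]

lemma jacobi_half_eq_zero (τ : ℂ) : jacobiTheta₂ (1 / 2 + τ / 2) τ = 0 := by
  have h := tj_even 0 τ
  rw [mul_zero, tj_zero_eq] at h
  exact (mul_eq_zero.mp h).resolve_left (Complex.exp_ne_zero _)

lemma tj_one_eq {τ : ℂ} (hτ : 0 < τ.im) :
    tj 1 τ = cexp (π * I * τ / 4) / (2 * π * I) * jacobiTheta₂' (1 / 2 + τ / 2) τ := by
  have h1 := (hasSum_jacobiTheta₂'_term (1 / 2 + τ / 2) hτ).mul_left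
    (cexp (π * I * τ / 4) / (2 * π * I))
  have h2 := (hasSum_jacobiTheta₂_term (1 / 2 + τ / 2) hτ).mul_left (cexp (π * I * τ / 4) / 2)
  rw [jacobi_half_eq_zero, mul_zero] at h2
  have h3 := h1.add h2
  rw [add_zero] at h3
  rw [← h3.tsum_eq, tj, ms]
  refine tsum_congr fun n => ?_
  have := two_pi_I_ne
  rw [msTerm_eq_jacobi, jacobiTheta₂'_term]
  field_simp

lemma tj_one_S {τ : ℂ} (hτ : 0 < τ.im) :
    tj 1 τ = I / ((-I * τ) ^ (1 / 2 : ℂ) * τ) * tj 1 (-1 / τ) := by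
  have hτ0 : τ ≠ 0 := by rintro rfl; simp at hτ
  have hτ' : 0 < (-1 / τ).im := by
    rw [neg_div, one_div, ← inv_neg]
    exact UpperHalfPlane.im_inv_neg_coe_pos ⟨τ, hτ⟩ |>.trans_eq (by simp)
  rw [tj_one_eq hτ, tj_one_eq hτ', jacobiTheta₂'_functional_equation]
  set s := -1 / τ with hs
  have e1 : (1 / 2 + τ / 2) / τ = 1 / 2 - s / 2 := by rw [hs]; field_simp; ring
  have e2 : 1 / 2 - s / 2 + s = 1 / 2 + s / 2 := by ring
  have h1 := jacobiTheta₂'_add_left' (1 / 2 - s / 2) s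
  have h2 := jacobiTheta₂_add_left' (1 / 2 - s / 2) s
  rw [e2, jacobi_half_eq_zero] at h2
  have h3 : jacobiTheta₂ (1 / 2 - s / 2) s = 0 :=
    (mul_eq_zero.mp h2.symm).resolve_left (Complex.exp_ne_zero _)
  have e3 : cexp (-π * I * (s + 2 * (1 / 2 - s / 2))) = -1 := by
    rw [show -π * I * (s + 2 * (1 / 2 - s / 2)) = -(π * I) by ring, Complex.exp_neg,
      Complex.exp_pi_mul_I]
    norm_num
  rw [e2, h3, e3, mul_zero, sub_zero] at h1
  have e4 : cexp (-π * I * (1 / 2 + τ / 2) ^ 2 / τ) =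
      -I * cexp (π * I * s / 4) * (cexp (π * I * τ / 4))⁻¹ := by
    have e5 : -I = cexp (-(π / 2 * I)) := by
      rw [Complex.exp_neg, Complex.exp_pi_div_two_mul_I, Complex.inv_I]
    rw [e5, ← Complex.exp_neg, ← Complex.exp_add, ← Complex.exp_add, hs]
    congr 1
    field_simp
    ring
  rw [e1, h3, h1, e4, mul_zero, sub_zero]
  have := Complex.exp_ne_zero (π * I * τ / 4)
  have h6 : (-I * τ) ^ (1 / 2 : ℂ) ≠ 0 := by
    rw [Ne, Complex.cpow_eq_zero_iff]; simp [hτ0]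
  have := two_pi_I_ne
  field_simp

lemma tj_one_T (τ : ℂ) : tj 1 (τ + 1) = cexp (π * I / 4) * tj 1 τ := by
  rw [tj, tj, ms, ms, ← tsum_mul_left]
  refine tsum_congr fun n => ?_
  have h : cexp (π * I * (n * (n + 1))) = 1 := by
    obtain ⟨m, hm⟩ := Int.even_mul_succ_self n
    rw [Complex.exp_eq_one_iff]
    refine ⟨m, ?_⟩
    have : (n : ℂ) * (n + 1) = m + m := by exact_mod_cast hm
    rw [this]; ring
  have e : cexp (π * I * (1 : ℝ) * (τ + 1) * (frq 1 (1 / 2) n : ℂ) ^ 2 +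
        2 * π * I * 0 * (frq 1 (1 / 2) n)) =
      cexp (π * I / 4) * cexp (π * I * (1 : ℝ) * τ * (frq 1 (1 / 2) n : ℂ) ^ 2 +
        2 * π * I * 0 * (frq 1 (1 / 2) n)) * cexp (π * I * (n * (n + 1))) := by
    rw [← Complex.exp_add, ← Complex.exp_add]
    congr 1
    simp only [frq]; push_cast; ring
  rw [msTerm, msTerm, e, h]
  ring

/-- `q^{-1/8} t₁(τ)` tends to `1` at `i∞`, the terms `n = 0` and `n = -1` contributing `1/2` each. -/
lemma tj_one_tendsto :
    Tendsto (fun τ : ℍ => cexp (-(π * I * τ / 4)) * tj 1 τ) atImInfty (𝓝 1) := by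
  let g : ℤ → ℂ := fun n => if n ∈ ({0, -1} : Finset ℤ) then 1 / 2 else 0
  have hg : ∑' n, g n = 1 := by
    rw [tsum_eq_sum (s := {0, -1}) fun n hn => if_neg hn, Finset.sum_pair (by norm_num)]
    norm_num
  have hterm : ∀ (τ : ℍ) (n : ℤ), cexp (-(π * I * τ / 4)) *
      msTerm (frq 1 (1 / 2) n) 1 (sg n) 1 τ 0 =
      sg n * (n + 1 / 2) * cexp (π * I * τ * (n * (n + 1))) := fun τ n => by
    rw [msTerm, mul_left_comm, ← Complex.exp_add, pow_one]
    congr 1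
    · simp [frq]
    · congr 1
      simp only [frq]; push_cast; ring
  have hnorm : ∀ (τ : ℍ) (n : ℤ), ‖sg n * (n + 1 / 2) * cexp (π * I * τ * (n * (n + 1)))‖ =
      |frq 1 (1 / 2) n| * Real.exp (-π * τ.im * (n * (n + 1))) := fun τ n => by
    have e1 : ‖sg n‖ = 1 := by simp [sg]
    have e2 : ((n : ℂ) + 1 / 2) = ((frq 1 (1 / 2) n : ℝ) : ℂ) := by simp [frq]
    have e3 : (π * I * τ * (n * (n + 1)) : ℂ) = ((π * (n * (n + 1)) : ℝ) : ℂ) * (τ * I) := by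
      push_cast; ring
    rw [norm_mul, norm_mul, e1, e2, one_mul, Complex.norm_real, Real.norm_eq_abs,
      Complex.norm_exp, e3, re_ofReal_mul, mul_I_re, UpperHalfPlane.coe_im]
    congr 2
    ring
  have hnn : ∀ n : ℤ, (0 : ℝ) ≤ n * (n + 1) := fun n => by
    have : 0 ≤ n * (n + 1) := by
      rcases le_or_gt 0 n with h | h <;> nlinarith
    exact_mod_cast this
  rw [← hg]
  have e : (fun τ : ℍ => cexp (-(π * I * τ / 4)) * tj 1 τ) = fun τ : ℍ =>
      ∑' n : ℤ, sg n * (n + 1 / 2) * cexp (π * I * τ * (n * (n + 1))) := by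
    ext τ
    rw [tj, ms, ← tsum_mul_left]
    exact tsum_congr (hterm τ)
  rw [e]
  refine tendsto_tsum_of_dominated_convergence
    (bound := fun n : ℤ => Real.exp (π / 4) *
      (|frq 1 (1 / 2) n| ^ 1 * Real.exp (-π * frq 1 (1 / 2) n ^ 2 + 0 * |frq 1 (1 / 2) n|)))
    ((summable_gauss one_pos _ π Real.pi_pos 0 1).mul_left _) (fun n => ?_) ?_
  · by_cases hn : n ∈ ({0, -1} : Finset ℤ)
    · have : ∀ τ : ℍ, g n = sg n * (n + 1 / 2) * cexp (π * I * τ * (n * (n + 1))) := fun τ => by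
        rw [show g n = 1 / 2 from if_pos hn]
        rcases Finset.mem_insert.mp hn with rfl | hn
        · simp [sg]
        · rw [Finset.mem_singleton.mp hn]
          norm_num [sg]
      exact tendsto_const_nhds.congr this
    · rw [show g n = 0 from if_neg hn, tendsto_zero_iff_norm_tendsto_zero]
      simp_rw [hnorm]
      have hpos : (0 : ℝ) < n * (n + 1) := by
        refine lt_of_le_of_ne (hnn n) fun h => hn ?_
        have : 0 = n * (n + 1) := by exact_mod_cast h
        rcases mul_eq_zero.mp this.symm with h | h
        · simp [h]
        · simp [eq_neg_of_add_eq_zero_left h]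
      have h1 : Tendsto (fun τ : ℍ => π * (n * (n + 1)) * τ.im) atImInfty atTop :=
        tendsto_comap.const_mul_atTop (by positivity)
      have h2 := (Real.tendsto_exp_neg_atTop_nhds_zero.comp h1).const_mul |frq 1 (1 / 2) n|
      rw [mul_zero] at h2
      refine h2.congr fun τ => ?_
      rw [comp_apply]
      congr 2
      ring
  · have h1 : ∀ᶠ τ : ℍ in atImInfty, 1 ≤ τ.im :=
      tendsto_comap.eventually (eventually_ge_atTop (1 : ℝ))
    filter_upwards [h1] with τ hτ n
    rw [hnorm, pow_one, mul_left_comm (Real.exp _), ← Real.exp_add]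
    gcongr
    have h2 := mul_le_mul_of_nonneg_right hτ (mul_nonneg Real.pi_pos.le (hnn n))
    simp only [frq]
    nlinarith

lemma tj_pow_tendsto : Tendsto (fun τ : ℍ => tj 1 τ ^ 8) atImInfty (𝓝 0) := by
  have h := (tj_one_tendsto.pow 8).mul (qParam_tendsto_atImInfty (one_pos : (0 : ℝ) < 1))
  rw [mul_zero] at h
  refine h.congr fun τ => ?_
  rw [mul_pow, ← Complex.exp_nat_mul, mul_right_comm, Periodic.qParam, ← Complex.exp_add]
  have : ((8 : ℕ) : ℂ) * -(π * I * τ / 4) + 2 * π * I * τ / (1 : ℝ) = 0 := by push_cast; ring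
  rw [this, Complex.exp_zero, one_mul]

lemma tj_pow_S : (fun τ : ℍ => tj 1 τ ^ 8) ∣[(12 : ℤ)] ModularGroup.S = fun τ : ℍ => tj 1 τ ^ 8 := by
  ext z
  suffices tj 1 (-(z : ℂ)⁻¹) ^ 8 * ((z : ℂ) ^ 12)⁻¹ = tj 1 z ^ 8 by
    rw [SL_slash_apply, ModularGroup.denom_apply, UpperHalfPlane.modular_S_smul]
    simpa [ModularGroup.S] using this
  have hz := z.ne_zero
  have h8 : ((-I * (z : ℂ)) ^ (1 / 2 : ℂ)) ^ 8 = (z : ℂ) ^ 4 := by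
    have h2 : ((-I * (z : ℂ)) ^ (1 / 2 : ℂ)) ^ 2 = -I * z := by
      rw [← Complex.cpow_nat_mul]; norm_num
    calc _ = (((-I * (z : ℂ)) ^ (1 / 2 : ℂ)) ^ 2) ^ 4 := by ring
      _ = I ^ 4 * z ^ 4 := by rw [h2]; ring
      _ = _ := by rw [Complex.I_pow_four, one_mul]
  have hI : I ^ 8 = 1 := by rw [show I ^ 8 = (I ^ 4) ^ 2 by ring, Complex.I_pow_four, one_pow]
  have h1 : tj 1 z = _ := tj_one_S (τ := (z : ℂ)) z.im_pos
  rw [h1, show -1 / (z : ℂ) = -(z : ℂ)⁻¹ by rw [neg_div, one_div], mul_pow, div_pow, mul_pow, h8, hI]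
  field_simp

lemma tj_pow_T : (fun τ : ℍ => tj 1 τ ^ 8) ∣[(12 : ℤ)] ModularGroup.T = fun τ : ℍ => tj 1 τ ^ 8 := by
  ext z
  suffices tj 1 (z + 1) ^ 8 = tj 1 z ^ 8 by
    rw [SL_slash_apply, ModularGroup.denom_apply, modular_T_smul]
    simpa [ModularGroup.T, add_comm] using this
  have h : cexp (π * I / 4) ^ 8 = 1 := by
    rw [← Complex.exp_nat_mul, Complex.exp_eq_one_iff]
    exact ⟨1, by push_cast; ring⟩
  rw [tj_one_T, mul_pow, h, one_mul]

/-- The eighth power of `t₁` as a cusp form of weight twelve and level one. -/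
def tjForm : CuspForm 𝒮ℒ 12 where
  toFun := fun τ : ℍ => tj 1 τ ^ 8
  slash_action_eq' A hA := by
    obtain ⟨A, rfl⟩ := hA
    exact SlashInvariantForm.slash_action_generators_SL2Z tj_pow_S tj_pow_T A
  holo' := by
    rw [UpperHalfPlane.mdifferentiable_iff]
    refine ((tj_diff 1).pow 8).congr fun z hz => ?_
    simp [ofComplex_apply_of_im_pos hz]
  zero_at_cusps' hc := by
    rw [Subgroup.IsArithmetic.isCusp_iff_isCusp_SL2Z] at hc
    rw [OnePoint.isZeroAt_iff_forall_SL2Z hc]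
    intro γ _
    rw [SlashInvariantForm.slash_action_generators_SL2Z tj_pow_S tj_pow_T]
    exact tj_pow_tendsto

/-- Level one cusp forms of weight twelve are multiples of `Δ = η²⁴`. -/
lemma tj_pow_eq :
    ∃ c : ℂ, c ≠ 0 ∧ ∀ t ∈ upperHalfPlaneSet, tj 1 t ^ 8 = c * ModularForm.eta t ^ 24 := by
  obtain ⟨c, hc⟩ := CuspForm.exists_smul_discriminant_of_weight_eq_twelve tjForm
  have h : ∀ z : ℍ, tj 1 z ^ 8 = c * ModularForm.eta z ^ 24 := fun z => (DFunLike.congr_fun hc z).symm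
  refine ⟨c, ?_, fun t ht => h ⟨t, ht⟩⟩
  rintro rfl
  have h0 : ∀ z : ℍ, (0 : ℂ) = cexp (-(π * I * z / 4)) * tj 1 z := fun z => by
    have := h z
    rw [zero_mul] at this
    rw [eq_zero_of_pow_eq_zero this, mul_zero]
  exact zero_ne_one (tendsto_nhds_unique (tendsto_const_nhds.congr h0) tj_one_tendsto)

lemma tj_ne_zero {t : ℂ} (ht : t ∈ upperHalfPlaneSet) : tj 1 t ≠ 0 := by
  obtain ⟨c, hc, h⟩ := tj_pow_eq
  intro h0
  have h1 := h t ht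
  rw [h0] at h1
  exact mul_ne_zero hc (pow_ne_zero 24 (eta_ne_zero ht)) (by rw [← h1]; norm_num)

/-- The logarithmic derivative of `t₁`, which is a constant multiple of `η³`. -/
lemma Dq_tj_one {t : ℂ} (ht : t ∈ upperHalfPlaneSet) : Dq (tj 1) t = Eis2 t / 8 * tj 1 t := by
  obtain ⟨c, hc, h⟩ := tj_pow_eq
  have hU := isOpen_upperHalfPlaneSet.mem_nhds ht
  have h1 := ((tj_diff 1).differentiableAt hU).hasDerivAt.pow 8
  have h2 := ((differentiableAt_eta_of_mem_upperHalfPlaneSet ht).hasDerivAt.pow 24).const_mul c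
  have h3 := h1.unique (h2.congr_of_eventuallyEq (by
    filter_upwards [hU] with s hs using h s hs))
  have h4 : deriv ModularForm.eta t = π * I / 12 * Eis2 t * ModularForm.eta t := by
    have h5 : logDeriv ModularForm.eta t = π * I / 12 * Eis2 t := by
      rw [show Eis2 t = _ from Eis2_coe ⟨t, ht⟩]
      exact logDeriv_eta_eq_E2 ⟨t, ht⟩
    rw [← h5, logDeriv_apply, div_mul_cancel₀ _ (eta_ne_zero ht)]
  have h6 := h t ht
  have h7 : (8 * tj 1 t ^ 7) * deriv (tj 1) t =
      (8 * tj 1 t ^ 7) * (2 * π * I * (Eis2 t / 8 * tj 1 t)) := by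
    rw [h4] at h3
    norm_num at h3
    linear_combination h3 - 2 * π * I * Eis2 t * h6
  have h8 := mul_left_cancel₀ (mul_ne_zero (by norm_num) (pow_ne_zero 7 (tj_ne_zero ht))) h7
  rw [Dq, h8, mul_div_cancel_left₀ _ two_pi_I_ne]

end ModularForms

/-- Kaneko–Zagier type equation for `G(τ,z) = ϑ(τ,2z)·ϑ(τ,z)²`:
`H^{(3)}_{7/2}(H^{(3)}_{3/2}(G)) − (5/4)·E₄·G = 0`. -/
theorem statement12 (τ z : ℂ) (hτ : 0 < τ.im) :
    heatMod 3 (7/2) (heatMod 3 (3/2) (fun t w => thetaJ t (2 * w) * thetaJ t w ^ 2)) τ z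
      - (5/4) * Eis4 τ * (thetaJ τ (2 * z) * thetaJ τ z ^ 2) = 0 := by
  obtain ⟨h1, h2⟩ := KZ_eq_zero Eis2_diff (fun _ h => ramanujan h) (fun _ h => Dq_tj_one h)
    (fun _ h => tj_ne_zero h) hτ
  rw [heat_equation_eq Eis2_diff hτ z, h1, h2]
  ring
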